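/- There exist constants C, c > 0 such that the following holds. If the partition is balanced, k ≥ 2, and n ≥ C·k²·p·(log n)¹²/(p−q)², then with probability at least 1 − c·n^{−2} over the choice of E, for every natural number η with 1 ≤ η ≤ log n, both ‖E^η·L‖_{2→∞} ≤ 10⁶·√(kp)·(100·√(np))^{η−1}·(log n)^{5η} and ‖E^η·ψ(G)‖_{2→∞} ≤ 10⁶·√(kp)·(100·√(np))^{η−1}·(log n)^{5η}, where L := A·(EG + GE). -/

import Mathlib

open MeasureTheory ProbabilityTheory Matrix Finset

namespace SBM

/-- Euclidean norm of a vector. -/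
noncomputable def enorm {m : Type*} [Fintype m] (x : m → ℝ) : ℝ :=
  Real.sqrt (∑ i, x i ^ 2)

/-- Spectral (ℓ²-operator) norm of a matrix. -/
noncomputable def specNorm {n : ℕ} (A : Matrix (Fin n) (Fin n) ℝ) : ℝ :=
  ‖Matrix.toEuclideanCLM (𝕜 := ℝ) A‖

/-- The `2 → ∞` norm: maximal Euclidean norm of a row. -/
noncomputable def n2i {n : ℕ} (A : Matrix (Fin n) (Fin n) ℝ) : ℝ :=
  ⨆ i : Fin n, enorm (A i)

/-- The mean matrix `G` of the SSBM with cluster assignment `cl`. -/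
def meanMatrix (n k : ℕ) (p q : ℝ) (cl : Fin n → Fin k) : Matrix (Fin n) (Fin n) ℝ :=
  Matrix.of fun u v => if cl u = cl v then p else q

/-- The size of cluster `i`. -/
def clusterSize {n k : ℕ} (cl : Fin n → Fin k) (i : Fin k) : ℕ :=
  (Finset.univ.filter fun v => cl v = i).card

/-- The partition is balanced: every cluster size is within a `1 ± 1/(16 log n)` factor
of `n / k`. -/
noncomputable def Balanced (n k : ℕ) (cl : Fin n → Fin k) : Prop :=
  ∀ i : Fin k,
    (1 - 1 / (16 * Real.log n)) * ((n : ℝ) / k) ≤ (clusterSize cl i : ℝ) ∧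
    (clusterSize cl i : ℝ) ≤ (1 + 1 / (16 * Real.log n)) * ((n : ℝ) / k)

/-- `lam, v` is a spectral decomposition of `A`: eigenvalues in non-increasing order with
an orthonormal eigenbasis. -/
def IsSpectralDecomp {n : ℕ} (A : Matrix (Fin n) (Fin n) ℝ)
    (lam : Fin n → ℝ) (v : Fin n → Fin n → ℝ) : Prop :=
  Antitone lam ∧
  (∀ i j, dotProduct (v i) (v j) = if i = j then (1 : ℝ) else 0) ∧
  A = ∑ i, lam i • Matrix.vecMulVec (v i) (v i)

/-- Orthogonal projection onto the span of the top `k` eigenvectors `v 0, …, v (k-1)`. -/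
noncomputable def projTop {n : ℕ} (k : ℕ) (v : Fin n → Fin n → ℝ) :
    Matrix (Fin n) (Fin n) ℝ :=
  ∑ i ∈ Finset.univ.filter (fun i : Fin n => (i : ℕ) < k), Matrix.vecMulVec (v i) (v i)

/-- The column of `A` indexed by `u`. -/
def column {n : ℕ} (A : Matrix (Fin n) (Fin n) ℝ) (u : Fin n) : Fin n → ℝ :=
  fun i => A i u

/-- `ψ(M) = A·M² + B·M` where `A = -1/(λ₁μ)`, `B = 1/λ₁ + 1/μ`. -/
noncomputable def psiM {n : ℕ} (lam1 mu : ℝ) (M : Matrix (Fin n) (Fin n) ℝ) :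
    Matrix (Fin n) (Fin n) ℝ :=
  (-(1 / (lam1 * mu))) • (M * M) + (1 / lam1 + 1 / mu) • M

/-- `φ(M) = ψ(M)^r`. -/
noncomputable def phiM {n : ℕ} (lam1 mu : ℝ) (r : ℕ) (M : Matrix (Fin n) (Fin n) ℝ) :
    Matrix (Fin n) (Fin n) ℝ :=
  psiM lam1 mu M ^ r

/-- `ψ(t) = A·t² + B·t` where `A = -1/(λ₁μ)`, `B = 1/λ₁ + 1/μ`. -/
noncomputable def psiR (lam1 mu t : ℝ) : ℝ :=
  (-(1 / (lam1 * mu))) * t ^ 2 + (1 / lam1 + 1 / mu) * t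

/-- `φ(t) = ψ(t)^r`. -/
noncomputable def phiR (lam1 mu : ℝ) (r : ℕ) (t : ℝ) : ℝ := psiR lam1 mu t ^ r

end SBM

namespace SBM

/-- The SSBM noise model: `E` is a random symmetric matrix whose upper-triangular entries
are independent, with `E_{uv} = 1 − G_{uv}` with probability `G_{uv}` and
`E_{uv} = −G_{uv}` with probability `1 − G_{uv}`, where `G` is the mean matrix. -/
def NoiseModel {Ω : Type*} [MeasureSpace Ω] {n k : ℕ} (p q : ℝ) (cl : Fin n → Fin k)
    (E : Ω → Matrix (Fin n) (Fin n) ℝ) : Prop :=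
  (∀ ω, (E ω).IsSymm) ∧
  (∀ u v : Fin n, Measurable fun ω => E ω u v) ∧
  iIndepFun (m := fun _ : {e : Fin n × Fin n // e.1 ≤ e.2} => (inferInstance : MeasurableSpace ℝ))
    (fun e ω => E ω e.1.1 e.1.2) ℙ ∧
  (∀ u v : Fin n, u ≤ v →
    Measure.map (fun ω => E ω u v) ℙ =
      ENNReal.ofReal (meanMatrix n k p q cl u v) •
        Measure.dirac (1 - meanMatrix n k p q cl u v) +
      ENNReal.ofReal (1 - meanMatrix n k p q cl u v) •
        Measure.dirac (-(meanMatrix n k p q cl u v)))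

end SBM

/-!
Put `m = ⌈log n⌉` and let `S` be a cluster or a single vertex. The moment of order `2 * m` of
`(E ^ η *ᵥ 1_S) u` is a sum over `2 * m`-tuples of walks from `u` to `S`. Since the entries of `E`
are independent and centred, only tuples that cover every edge at least twice contribute, so at most
half of the steps can be first visits to a vertex. If `u ∉ S`, then each walk must moreover either
pay for a step that is not part of this doubly covered exploration tree or end at a vertex of `S`
visited for the first time, and this gains the density of `S`. Hence, with high probability,
`((E ^ η *ᵥ 1_S) u) ^ 2` is at most about `(log n ^ 2 * n * p) ^ η` times that density,
simultaneously for all `u`, `S` and `η ≤ log n`.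

Singletons give `‖E‖ ≲ log n * √(n * p)`, and clusters bound the projection of the rows of `E ^ η`
onto the vectors that are constant on clusters. The mean matrix `G` annihilates the complement of
these vectors, and all its eigenvalues other than `λ₁` are at most `2 * μ`, so `ψ` is bounded on its
spectrum. The rows of `E ^ η * ψ(G)` and `E ^ η * L` are therefore controlled by these projections.
-/

namespace SBM

section FirstVisits

variable {V : Type*} {N : ℕ}

/-- The time `t` is the first visit of `W` to the vertex `W t`, where the root `u` counts as visited
before time `0`. -/
def IsFirstVisit (u : V) (W : Fin N → V) (t : Fin N) : Prop :=
  W t ≠ u ∧ ∀ s < t, W s ≠ W t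

instance [DecidableEq V] (u : V) (W : Fin N → V) : DecidablePred (IsFirstVisit u W) := fun t =>
  inferInstanceAs (Decidable (W t ≠ u ∧ ∀ s < t, W s ≠ W t))

variable {u : V} {W : Fin N → V}

lemma IsFirstVisit.eq_of_eq {s t : Fin N} (hs : IsFirstVisit u W s) (ht : IsFirstVisit u W t)
    (h : W s = W t) : s = t := by
  rcases lt_trichotomy s t with hlt | heq | hgt
  · exact absurd h (ht.2 s hlt)
  · exact heq
  · exact absurd h.symm (hs.2 t hgt)

lemma isFirstVisit_snoc_castSucc (u : V) (W : Fin N → V) (x : V) (t : Fin N) :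
    IsFirstVisit u (Fin.snoc W x : Fin (N + 1) → V) t.castSucc ↔ IsFirstVisit u W t := by
  have not_last {s : Fin (N + 1)} (hs : s < t.castSucc) : s ≠ Fin.last N :=
    (hs.trans (Fin.castSucc_lt_last t)).ne
  refine and_congr (by rw [Fin.snoc_castSucc]) ⟨fun h s hs => ?_, fun h s hs => ?_⟩
  · simpa only [Fin.snoc_castSucc] using h s.castSucc (Fin.castSucc_lt_castSucc_iff.2 hs)
  · obtain ⟨s, rfl⟩ := Fin.exists_castSucc_eq.2 (not_last hs)
    simpa only [Fin.snoc_castSucc] using h s (Fin.castSucc_lt_castSucc_iff.1 hs)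

variable [DecidableEq V]

lemma isFirstVisit_snoc_last (u : V) (W : Fin N → V) {x : V} (hxu : x ≠ u)
    (hx : x ∉ univ.image W) : IsFirstVisit u (Fin.snoc W x : Fin (N + 1) → V) (Fin.last N) := by
  refine ⟨by rwa [Fin.snoc_last], fun s hs => ?_⟩
  obtain ⟨s, rfl⟩ := Fin.exists_castSucc_eq.2 hs.ne
  rw [Fin.snoc_castSucc, Fin.snoc_last]
  rintro rfl
  exact hx (mem_image_of_mem W (mem_univ s))

/-- The first-visit times of `W`; their number is the number of vertices that `W` visits
besides the root. -/
def firstVisits (u : V) (W : Fin N → V) : Finset (Fin N) := {t | IsFirstVisit u W t}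

lemma mem_firstVisits {t : Fin N} : t ∈ firstVisits u W ↔ IsFirstVisit u W t := by
  simp [firstVisits]

end FirstVisits

section Fibers

lemma two_mul_card_le_of_two_le_fibers {ι α : Type*} [Fintype ι] [DecidableEq α] {f : ι → α}
    (hf : ∀ t, 2 ≤ #{s | f s = f t}) {B : Finset α} (hB : (B : Set α) ⊆ Set.range f) :
    2 * #B ≤ #{t | f t ∈ B} := by
  refine mul_card_image_le_card_of_maps_to (f := f) (s := {t | f t ∈ B}) (t := B)
    (fun t ht => (mem_filter.1 ht).2) 2 fun e he => ?_
  obtain ⟨t, rfl⟩ := hB he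
  refine (hf t).trans (card_le_card fun s hs => ?_)
  have hst : f s = f t := (mem_filter.1 hs).2
  simpa [hst] using he

end Fibers

section Walks

variable {V : Type*} {M η : ℕ}

/-- A map `W : Fin (M * (η + 1)) → V` encodes `M` consecutive walks of `η + 1` steps, all
starting at `u`, where `W t` is the vertex at which step `t` arrives. This is the vertex from which
step `t` departs. -/
def departure (u : V) (W : Fin (M * (η + 1)) → V) (t : Fin (M * (η + 1))) : V :=
  (Fin.cons u fun j => W (finProdFinEquiv ((finProdFinEquiv.symm t).1, j)) : Fin (η + 2) → V)
    (finProdFinEquiv.symm t).2.castSucc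

/-- The undirected edge, possibly a loop, traversed in step `t`. -/
def stepEdge (u : V) (W : Fin (M * (η + 1)) → V) (t : Fin (M * (η + 1))) : Sym2 V :=
  s(departure u W t, W t)

@[simp]
lemma departure_zero (u : V) (W : Fin (M * (η + 1)) → V) (i : Fin M) :
    departure u W (finProdFinEquiv (i, 0)) = u := by
  simp [departure]

@[simp]
lemma departure_succ (u : V) (W : Fin (M * (η + 1)) → V) (i : Fin M) (j : Fin η) :
    departure u W (finProdFinEquiv (i, j.succ)) = W (finProdFinEquiv (i, j.castSucc)) := by
  simp [departure]

variable {u : V} {W : Fin (M * (η + 1)) → V}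

lemma departure_eq_root_or_visited (u : V) (W : Fin (M * (η + 1)) → V) (t : Fin (M * (η + 1))) :
    departure u W t = u ∨ ∃ s < t, W s = departure u W t := by
  obtain ⟨⟨i, j⟩, rfl⟩ := finProdFinEquiv.surjective t
  cases j using Fin.cases with
  | zero => exact Or.inl (departure_zero u W i)
  | succ j => exact Or.inr ⟨finProdFinEquiv (i, j.castSucc), by simp [Fin.lt_def],
      (departure_succ u W i j).symm⟩

lemma IsFirstVisit.stepEdge_ne_of_lt {s t : Fin (M * (η + 1))} (ht : IsFirstVisit u W t)
    (hst : s < t) : stepEdge u W s ≠ stepEdge u W t := by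
  intro h
  rcases Sym2.eq_iff.1 h with ⟨-, hW⟩ | ⟨hdep, -⟩
  · exact ht.2 s hst hW
  · rcases departure_eq_root_or_visited u W s with hroot | ⟨r, hr, hvisit⟩
    · exact ht.1 (hdep ▸ hroot)
    · exact ht.2 r (hr.trans hst) (hvisit.trans hdep)

/-- The vertices joined to the root in the exploration tree of `W` (each vertex being attached to
the one from which it was first reached) by a branch that avoids `S`, the root excepted. -/
inductive ReachedAvoiding (u : V) (S : Finset V) (W : Fin (M * (η + 1)) → V) : V → Prop
  | root : ReachedAvoiding u S W u
  | step (t : Fin (M * (η + 1))) : IsFirstVisit u W t → W t ∉ S →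
      ReachedAvoiding u S W (departure u W t) → ReachedAvoiding u S W (W t)

namespace ReachedAvoiding

variable {S : Finset V}

lemma notMem (hu : u ∉ S) {x : V} (h : ReachedAvoiding u S W x) : x ∉ S := by
  cases h with
  | root => exact hu
  | step t _ hS _ => exact hS

lemma departure_of_isFirstVisit {t : Fin (M * (η + 1))} (ht : IsFirstVisit u W t) {x : V}
    (hx : x = W t) (h : ReachedAvoiding u S W x) : ReachedAvoiding u S W (departure u W t) := by
  cases h with
  | root => exact absurd hx.symm ht.1
  | step s hs _ hdep => exact hs.eq_of_eq ht hx ▸ hdep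

end ReachedAvoiding

variable [DecidableEq V]

lemma stepEdge_injOn_firstVisits (u : V) (W : Fin (M * (η + 1)) → V) :
    Set.InjOn (stepEdge u W) (firstVisits u W) := by
  intro s hs t ht h
  rw [mem_coe, mem_firstVisits] at hs ht
  rcases lt_trichotomy s t with hlt | heq | hgt
  · exact absurd h (ht.stepEdge_ne_of_lt hlt)
  · exact heq
  · exact absurd h.symm (hs.stepEdge_ne_of_lt hgt)

lemma card_firstVisits_le_card_edges (u : V) (W : Fin (M * (η + 1)) → V) :
    #(firstVisits u W) ≤ #(univ.image (stepEdge u W)) := by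
  rw [← card_image_of_injOn (stepEdge_injOn_firstVisits u W)]
  exact card_le_card (image_subset_image (subset_univ _))

lemma two_mul_card_le_of_subset_firstVisits (hW : ∀ t, 2 ≤ #{s | stepEdge u W s = stepEdge u W t})
    {A : Finset (Fin (M * (η + 1)))} (hA : A ⊆ firstVisits u W) :
    2 * #A ≤ #{t | stepEdge u W t ∈ A.image (stepEdge u W)} := by
  rw [← card_image_of_injOn ((stepEdge_injOn_firstVisits u W).mono (coe_subset.2 hA))]
  exact two_mul_card_le_of_two_le_fibers hW (by simp)

lemma two_mul_card_firstVisits_le (hW : ∀ t, 2 ≤ #{s | stepEdge u W s = stepEdge u W t}) :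
    2 * #(firstVisits u W) ≤ M * (η + 1) :=
  (two_mul_card_le_of_subset_firstVisits hW subset_rfl).trans (card_finset_fin_le _)

lemma ReachedAvoiding.arrival {S : Finset V} {t : Fin (M * (η + 1))}
    (h : ReachedAvoiding u S W (departure u W t))
    (ht : stepEdge u W t ∈ {s ∈ firstVisits u W | W s ∉ S}.image (stepEdge u W)) :
    ReachedAvoiding u S W (W t) := by
  obtain ⟨s, hs, hst⟩ := mem_image.1 ht
  rw [mem_filter, mem_firstVisits] at hs
  rcases Sym2.eq_iff.1 hst with ⟨hdep, harr⟩ | ⟨hdep, harr⟩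
  · exact harr ▸ .step s hs.1 hs.2 (hdep ▸ h)
  · exact hdep ▸ h.departure_of_isFirstVisit hs.1 harr.symm

lemma exists_stepEdge_notMem_of_endpoint_mem {S : Finset V} (hu : u ∉ S) (i : Fin M)
    (hend : W (finProdFinEquiv (i, Fin.last η)) ∈ S) :
    ∃ j, stepEdge u W (finProdFinEquiv (i, j)) ∉
      {t ∈ firstVisits u W | W t ∉ S}.image (stepEdge u W) := by
  by_contra! hmem
  have reached (j : Fin (η + 1)) : ReachedAvoiding u S W (W (finProdFinEquiv (i, j))) := by
    induction j using Fin.induction with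
    | zero => exact .arrival (by rw [departure_zero]; exact .root) (hmem 0)
    | succ j ih => exact .arrival (by rwa [departure_succ]) (hmem j.succ)
  exact (reached (Fin.last η)).notMem hu hend

-- Each of the `M` walks spends a step on an edge other than the at least doubly covered ones
-- along which the vertices outside `S` are first reached.
lemma two_mul_card_firstVisits_add_le {S : Finset V} (hu : u ∉ S)
    (hW : ∀ t, 2 ≤ #{s | stepEdge u W s = stepEdge u W t})
    (hend : ∀ i, W (finProdFinEquiv (i, Fin.last η)) ∈ S) :
    2 * #(firstVisits u W) + M ≤ M * (η + 1) + 2 * #{t ∈ firstVisits u W | W t ∈ S} := by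
  set B := {t ∈ firstVisits u W | W t ∉ S}.image (stepEdge u W)
  have hdouble : 2 * #{t ∈ firstVisits u W | W t ∉ S} ≤ #{t | stepEdge u W t ∈ B} :=
    two_mul_card_le_of_subset_firstVisits hW (filter_subset _ _)
  have hleave : M ≤ #{t | stepEdge u W t ∉ B} := by
    choose j hj using fun i => exists_stepEdge_notMem_of_endpoint_mem hu i (hend i)
    have := card_le_card_of_injOn (s := univ) (t := {t | stepEdge u W t ∉ B})
      (fun i => finProdFinEquiv (i, j i)) (fun i _ => mem_filter.2 ⟨mem_univ _, hj i⟩)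
      (fun i _ i' _ h => (Prod.ext_iff.1 (finProdFinEquiv.injective h)).1)
    simpa using this
  have hsteps := card_filter_add_card_filter_not (s := univ) (stepEdge u W · ∈ B)
  have hvisits := card_filter_add_card_filter_not (s := firstVisits u W) (W · ∈ S)
  rw [card_univ, Fintype.card_fin] at hsteps
  omega

end Walks

section Weights

variable {V : Type*} [Fintype V] [DecidableEq V] {N : ℕ}

/-- The weight of time `t` of the vertex sequence `W`: a first visit costs one over the number of
choices of the new vertex, with the density `ρ` of `S` as the discount inside `S`, and a revisit
costs `1 / D`. The weights of the possible last vertices add up to at most `3`, so that a sum over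
sequences can be estimated by the largest ratio of a summand to its weight. -/
noncomputable def stepWeight (u : V) (S : Finset V) (D ρ : ℝ) (W : Fin N → V) (t : Fin N) : ℝ :=
  if IsFirstVisit u W t then
    if W t ∈ S then 1 / (ρ * Fintype.card V) else 1 / Fintype.card V
  else 1 / D

variable {D ρ : ℝ}

lemma stepWeight_nonneg (u : V) (S : Finset V) (hD : 0 ≤ D) (hρ : 0 ≤ ρ) (W : Fin N → V)
    (t : Fin N) : 0 ≤ stepWeight u S D ρ W t := by
  unfold stepWeight
  split_ifs <;> positivity

lemma stepWeight_snoc_castSucc (u : V) (S : Finset V) (D ρ : ℝ) (W : Fin N → V) (x : V)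
    (t : Fin N) :
    stepWeight u S D ρ (Fin.snoc W x : Fin (N + 1) → V) t.castSucc = stepWeight u S D ρ W t := by
  simp only [stepWeight, isFirstVisit_snoc_castSucc, Fin.snoc_castSucc]

lemma stepWeight_snoc_last_le (u : V) (S : Finset V) (hD : 0 ≤ D) (hρ : 0 ≤ ρ) (W : Fin N → V)
    (x : V) :
    stepWeight u S D ρ (Fin.snoc W x : Fin (N + 1) → V) (Fin.last N) ≤
      (if x ∈ insert u (univ.image W) then 1 / D else 0) +
      (if x ∈ S then 1 / (ρ * Fintype.card V) else 0) + 1 / Fintype.card V := by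
  have hV : (0 : ℝ) ≤ 1 / Fintype.card V := by positivity
  have hSV : (0 : ℝ) ≤ 1 / (ρ * Fintype.card V) := by positivity
  by_cases hx : x ∈ insert u (univ.image W)
  · have hD_inv : 0 ≤ 1 / D := by positivity
    unfold stepWeight
    simp only [Fin.snoc_last, if_pos hx]
    split_ifs <;> linarith
  · have hfirst : IsFirstVisit u (Fin.snoc W x : Fin (N + 1) → V) (Fin.last N) :=
      isFirstVisit_snoc_last u W (fun h => hx (h ▸ mem_insert_self _ _))
        fun h => hx (mem_insert_of_mem h)
    simp only [stepWeight, if_pos hfirst, Fin.snoc_last, if_neg hx]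
    split_ifs <;> linarith

lemma sum_stepWeight_snoc_last_le (u : V) {S : Finset V} (hρ : 0 < ρ)
    (hS : #S ≤ ρ * Fintype.card V) (hD : (N : ℝ) + 1 ≤ D) (W : Fin N → V) :
    ∑ x, stepWeight u S D ρ (Fin.snoc W x : Fin (N + 1) → V) (Fin.last N) ≤ 3 := by
  have hD0 : 0 < D := (by positivity : (0 : ℝ) < N + 1).trans_le hD
  have : Nonempty V := ⟨u⟩
  have hV : 0 < (Fintype.card V : ℝ) := by exact_mod_cast Fintype.card_pos
  have hvisited : (#(insert u (univ.image W)) : ℝ) * (1 / D) ≤ 1 := by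
    rw [mul_one_div, div_le_one hD0]
    refine le_trans ?_ hD
    have himage : #(univ.image W) ≤ N := card_image_le.trans_eq (card_fin N)
    exact_mod_cast (card_insert_le u _).trans (Nat.succ_le_succ himage)
  have htarget : (#S : ℝ) * (1 / (ρ * Fintype.card V)) ≤ 1 := by
    rw [mul_one_div]
    exact (div_le_one (by positivity)).2 hS
  calc _ ≤ ∑ x, ((if x ∈ insert u (univ.image W) then 1 / D else 0) +
        (if x ∈ S then 1 / (ρ * Fintype.card V) else 0) + 1 / Fintype.card V) :=
        sum_le_sum fun x _ => stepWeight_snoc_last_le u S hD0.le hρ.le W x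
    _ = #(insert u (univ.image W)) * (1 / D) + #S * (1 / (ρ * Fintype.card V)) +
        Fintype.card V * (1 / Fintype.card V) := by
        simp only [sum_add_distrib, sum_ite_mem, univ_inter, sum_const, nsmul_eq_mul, card_univ]
    _ ≤ 1 + 1 + 1 := by
        gcongr
        exact (mul_one_div_cancel hV.ne').le
    _ = 3 := by norm_num

lemma sum_prod_stepWeight_le (u : V) {S : Finset V} (hρ : 0 < ρ)
    (hS : #S ≤ ρ * Fintype.card V) (hD : 0 ≤ D) (hN : N ≤ D) :
    ∑ W : Fin N → V, ∏ t, stepWeight u S D ρ W t ≤ 3 ^ N := by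
  induction N with
  | zero => simp
  | succ N ih =>
    push_cast at hN
    calc _ = ∑ W : Fin N → V, (∏ t, stepWeight u S D ρ W t) *
          ∑ x, stepWeight u S D ρ (Fin.snoc W x : Fin (N + 1) → V) (Fin.last N) := by
          rw [← (Fin.snocEquiv fun _ : Fin (N + 1) => V).sum_comp, Fintype.sum_prod_type_right]
          simp only [Fin.snocEquiv, Equiv.coe_fn_mk, Fin.prod_univ_castSucc,
            stepWeight_snoc_castSucc, mul_sum]
      _ ≤ ∑ W : Fin N → V, (∏ t, stepWeight u S D ρ W t) * 3 := by
          gcongr with W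
          · exact prod_nonneg fun t _ => stepWeight_nonneg u S hD hρ.le W t
          · exact sum_stepWeight_snoc_last_le u hρ hS hN W
      _ ≤ 3 ^ (N + 1) := by
          rw [← sum_mul, pow_succ]
          gcongr
          exact ih (by linarith)

lemma prod_stepWeight (u : V) (S : Finset V) (D ρ : ℝ) (W : Fin N → V) :
    ∏ t, stepWeight u S D ρ W t = (1 / (Fintype.card V : ℝ)) ^ #(firstVisits u W) *
      (1 / ρ) ^ #{t ∈ firstVisits u W | W t ∈ S} * (1 / D) ^ (N - #(firstVisits u W)) := by
  have hfactor (t : Fin N) : stepWeight u S D ρ W t = if IsFirstVisit u W t then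
      1 / (Fintype.card V : ℝ) * (if W t ∈ S then 1 / ρ else 1) else 1 / D := by
    unfold stepWeight
    split_ifs <;> simp [mul_comm]
  have hrevisits : #{t | ¬ IsFirstVisit u W t} = N - #(firstVisits u W) := by
    rw [filter_not, card_sdiff_of_subset (filter_subset _ _), card_univ, Fintype.card_fin]
    rfl
  simp only [hfactor]
  rw [prod_ite, prod_mul_distrib, prod_const, prod_const, ← prod_filter, prod_const, hrevisits]
  rfl

-- `v` is the number of first visits and `r` the number of those in `S`: the three weights times the
-- right-hand factor leave `p ^ v * (n * p / D) ^ (m * L - v) * ρ ^ m / ρ ^ r`.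
lemma pow_le_weight_mul {n p : ℝ} (hn : 0 < n) (hD : 0 < D) (hρ : 0 < ρ) (hρ1 : ρ ≤ 1)
    (hDn : D ≤ ρ * (n * p)) {m L v r : ℕ} (hv : v ≤ m * L) (hr : ρ = 1 ∨ v + m ≤ m * L + r) :
    p ^ v ≤ (1 / n) ^ v * (1 / ρ) ^ r * (1 / D) ^ (2 * m * L - v) *
      ((D * (n * p)) ^ (m * L) * ρ ^ m) := by
  have hnp : 0 < n * p := pos_of_mul_pos_right (hD.trans_le hDn) hρ.le
  have hp : 0 < p := pos_of_mul_pos_right hnp hn.le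
  have hratio : 1 / ρ ≤ n * p / D := by
    rw [div_le_div_iff₀ hρ hD]
    linarith
  have hinv : 1 ≤ 1 / ρ := (one_le_div hρ).2 hρ1
  obtain ⟨a, ha⟩ := Nat.exists_eq_add_of_le hv
  have hexp : 2 * m * L - v = v + 2 * a := by rw [mul_assoc]; omega
  have hprod : (1 / n) ^ v * (1 / ρ) ^ r * (1 / D) ^ (v + 2 * a) *
      ((D * (n * p)) ^ (v + a) * ρ ^ m) = p ^ v * ((n * p / D) ^ a * ρ ^ m * (1 / ρ) ^ r) := by
    simp only [one_div, inv_pow, div_pow, mul_pow, pow_add, pow_mul]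
    field_simp
    ring
  rw [hexp, ha, hprod]
  refine le_mul_of_one_le_right (by positivity) ?_
  rcases hr with rfl | hr
  · simpa using one_le_pow₀ (hinv.trans hratio)
  · calc (1 : ℝ) = (1 / ρ) ^ m * ρ ^ m := by rw [← mul_pow, one_div_mul_cancel hρ.ne', one_pow]
      _ ≤ (1 / ρ) ^ (a + r) * ρ ^ m := by
          gcongr
          · omega
      _ = (1 / ρ) ^ a * ρ ^ m * (1 / ρ) ^ r := by ring
      _ ≤ (n * p / D) ^ a * ρ ^ m * (1 / ρ) ^ r := by gcongr

end Weights

section WalkExpansion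

variable {V R : Type*} [Fintype V] [DecidableEq V] [CommSemiring R]

lemma pow_mulVec_apply_eq_sum_walks (A : Matrix V V R) (z : V → R) (η : ℕ) (u : V) :
    (A ^ η *ᵥ z) u = ∑ w : Fin η → V,
      (∏ j : Fin η, A ((Fin.cons u w : Fin (η + 1) → V) j.castSucc) (w j)) *
        z ((Fin.cons u w : Fin (η + 1) → V) (Fin.last η)) := by
  induction η generalizing u with
  | zero => simp [Fin.last]
  | succ η ih =>
    rw [pow_succ', ← mulVec_mulVec, mulVec, dotProduct,
      ← (Fin.consEquiv fun _ : Fin (η + 1) => V).sum_comp, Fintype.sum_prod_type]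
    refine sum_congr rfl fun x _ => ?_
    rw [ih, mul_sum]
    refine sum_congr rfl fun w _ => ?_
    simp only [Fin.consEquiv, Equiv.coe_fn_mk, Fin.prod_univ_succ, ← Fin.succ_last,
      Fin.cons_succ, Fin.castSucc_zero, Fin.cons_zero, ← Fin.succ_castSucc]
    ring

lemma pow_mulVec_apply_pow_eq_sum_walks (A : Matrix V V R) (z : V → R) (η M : ℕ) (u : V) :
    ((A ^ (η + 1) *ᵥ z) u) ^ M = ∑ W : Fin (M * (η + 1)) → V,
      (∏ t, A (departure u W t) (W t)) *
        ∏ i : Fin M, z (W (finProdFinEquiv (i, Fin.last η))) := by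
  rw [pow_mulVec_apply_eq_sum_walks, Fintype.sum_pow]
  let split : (Fin (M * (η + 1)) → V) ≃ (Fin M → Fin (η + 1) → V) :=
    (finProdFinEquiv.symm.arrowCongr (Equiv.refl V)).trans (Equiv.curry _ _ _)
  rw [← split.sum_comp]
  refine sum_congr rfl fun W _ => ?_
  rw [prod_mul_distrib, ← finProdFinEquiv.prod_comp, Fintype.prod_prod_type]
  simp only [departure, Equiv.symm_apply_apply, ← Fin.succ_last, Fin.cons_succ]
  rfl

end WalkExpansion

section Noise

variable {ι Ω : Type*} [MeasurableSpace Ω] {μ : Measure Ω} {X : ι → Ω → ℝ} {p : ℝ}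

/-- Independent centred random variables that are bounded by `1` and have variance at most `p`. -/
structure IsCenteredNoise (X : ι → Ω → ℝ) (p : ℝ) (μ : Measure Ω) : Prop where
  indep : iIndepFun X μ
  aemeasurable : ∀ i, AEMeasurable (X i) μ
  abs_le_one : ∀ i, ∀ᵐ ω ∂μ, |X i ω| ≤ 1
  integral_eq_zero : ∀ i, ∫ ω, X i ω ∂μ = 0
  integral_sq_le : ∀ i, ∫ ω, X i ω ^ 2 ∂μ ≤ p

namespace IsCenteredNoise

lemma integrable_prod [IsFiniteMeasure μ] (hX : IsCenteredNoise X p μ) {N : ℕ} (ε : Fin N → ι) :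
    Integrable (fun ω => ∏ t, X (ε t) ω) μ := by
  refine Integrable.of_bound (C := 1)
    (Finset.aemeasurable_fun_prod _ fun t _ => hX.aemeasurable _).aestronglyMeasurable ?_
  filter_upwards [ae_all_iff.2 fun t => hX.abs_le_one (ε t)] with ω hω
  rw [Real.norm_eq_abs, abs_prod]
  exact prod_le_one (fun _ _ => abs_nonneg _) fun t _ => hω t

lemma abs_integral_pow_le [IsFiniteMeasure μ] (hX : IsCenteredNoise X p μ) (i : ι) {c : ℕ}
    (hc : 2 ≤ c) : |∫ ω, X i ω ^ c ∂μ| ≤ p := by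
  have hsq : Integrable (fun ω => X i ω ^ 2) μ := by
    simpa using hX.integrable_prod (fun _ : Fin 2 => i)
  refine abs_integral_le_integral_abs.trans (le_trans ?_ (hX.integral_sq_le i))
  refine integral_mono_of_nonneg (.of_forall fun ω => abs_nonneg _) hsq ?_
  filter_upwards [hX.abs_le_one i] with ω hω
  simpa only [abs_pow, sq_abs] using pow_le_pow_of_le_one (abs_nonneg (X i ω)) hω hc

lemma abs_integral_prod_le [DecidableEq ι] [Finite ι] (hX : IsCenteredNoise X p μ) {N : ℕ}
    (ε : Fin N → ι) :
    |∫ ω, ∏ t, X (ε t) ω ∂μ| ≤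
      if ∀ t, 2 ≤ #{s | ε s = ε t} then p ^ #(univ.image ε) else 0 := by
  have := Fintype.ofFinite ι
  have : IsProbabilityMeasure μ := hX.indep.isProbabilityMeasure
  have hzero {i : ι} (hi : i ∉ univ.image ε) : #{t | ε t = i} = 0 := by
    simpa [filter_eq_empty_iff] using hi
  have hprod (ω : Ω) : ∏ t, X (ε t) ω = ∏ i, X i ω ^ #{t | ε t = i} := by
    rw [prod_comp (fun i => X i ω) ε]
    exact prod_subset (subset_univ _) fun i _ hi => by rw [hzero hi, pow_zero]
  have hindep : ∫ ω, ∏ t, X (ε t) ω ∂μ = ∏ i, ∫ ω, X i ω ^ #{t | ε t = i} ∂μ := by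
    simp only [hprod]
    exact hX.indep.integral_fun_prod_comp (f := fun i x => x ^ #{t | ε t = i}) hX.aemeasurable
      fun _ => (measurable_id.pow_const _).aestronglyMeasurable
  rw [hindep, abs_prod]
  split_ifs with h
  · calc _ = ∏ i ∈ univ.image ε, |∫ ω, X i ω ^ #{t | ε t = i} ∂μ| :=
          (prod_subset (subset_univ _) fun i _ hi => by simp [hzero hi]).symm
      _ ≤ ∏ _ ∈ univ.image ε, p := by
          refine prod_le_prod (fun _ _ => abs_nonneg _) fun i hi => ?_
          obtain ⟨t, -, rfl⟩ := mem_image.1 hi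
          exact hX.abs_integral_pow_le _ (h t)
      _ = p ^ #(univ.image ε) := prod_const p
  · push Not at h
    obtain ⟨t, ht⟩ := h
    have hone : #{s | ε s = ε t} = 1 :=
      le_antisymm (Nat.lt_succ_iff.1 ht) (card_pos.2 ⟨t, by simp⟩)
    refine (prod_eq_zero (mem_univ (ε t)) ?_).le
    rw [hone]
    simp only [pow_one, hX.integral_eq_zero, abs_zero]

end IsCenteredNoise

end Noise

section Moments

/-- The symmetric matrix with entries `x s(a, b)`. -/
def sym2Matrix {V : Type*} (x : Sym2 V → ℝ) : Matrix V V ℝ :=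
  of fun a b => x s(a, b)

lemma isSymm_sym2Matrix {V : Type*} (x : Sym2 V → ℝ) : (sym2Matrix x).IsSymm :=
  IsSymm.ext fun _ _ => congrArg x Sym2.eq_swap

variable {V Ω : Type*} [Fintype V] [DecidableEq V] [MeasurableSpace Ω] {μ : Measure Ω}

lemma IsCenteredNoise.abs_integral_prod_stepEdge_le {X : Sym2 V → Ω → ℝ} {p : ℝ}
    (hX : IsCenteredNoise X p μ) (hp0 : 0 ≤ p) (hp1 : p ≤ 1) (u : V) {S : Finset V} {D ρ : ℝ}
    (hD : 0 < D) (hρ : 0 < ρ) (hρ1 : ρ ≤ 1) (hDn : D ≤ ρ * (Fintype.card V * p))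
    (hgain : ρ = 1 ∨ u ∉ S) {m η : ℕ} {W : Fin (2 * m * (η + 1)) → V}
    (hend : ∀ i, W (finProdFinEquiv (i, Fin.last η)) ∈ S) :
    |∫ ω, ∏ t, X (stepEdge u W t) ω ∂μ| ≤ (∏ t, stepWeight u S D ρ W t) *
      ((D * (Fintype.card V * p)) ^ (m * (η + 1)) * ρ ^ m) := by
  have : Nonempty V := ⟨u⟩
  have hV : 0 < (Fintype.card V : ℝ) := by exact_mod_cast Fintype.card_pos
  refine (hX.abs_integral_prod_le (stepEdge u W)).trans ?_
  split_ifs with hW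
  · have hv := two_mul_card_firstVisits_le hW
    have hlength : 2 * m * (η + 1) = 2 * (m * (η + 1)) := mul_assoc _ _ _
    refine (pow_le_pow_of_le_one hp0 hp1 (card_firstVisits_le_card_edges u W)).trans ?_
    rw [prod_stepWeight]
    refine pow_le_weight_mul hV hD hρ hρ1 hDn (by omega) (hgain.imp_right fun hu => ?_)
    have := two_mul_card_firstVisits_add_le hu hW hend
    omega
  · have := prod_nonneg (s := univ) fun t _ => stepWeight_nonneg u S hD.le hρ.le W t
    positivity

theorem IsCenteredNoise.integral_pow_mulVec_indicator_le {X : Sym2 V → Ω → ℝ} {p : ℝ}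
    (hX : IsCenteredNoise X p μ) (hp0 : 0 ≤ p) (hp1 : p ≤ 1) (u : V) {S : Finset V} {D ρ : ℝ}
    (hD : 0 < D) (hρ : 0 < ρ) (hρ1 : ρ ≤ 1) (hDn : D ≤ ρ * (Fintype.card V * p))
    (hgain : ρ = 1 ∨ u ∉ S) (hS : #S ≤ ρ * Fintype.card V) {m η : ℕ}
    (hm : 2 * m * (η + 1) ≤ D) :
    Integrable (fun ω => ((sym2Matrix (X · ω) ^ (η + 1) *ᵥ (S : Set V).indicator 1) u) ^ (2 * m))
      μ ∧
    ∫ ω, ((sym2Matrix (X · ω) ^ (η + 1) *ᵥ (S : Set V).indicator 1) u) ^ (2 * m) ∂μ ≤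
      ((9 * D * (Fintype.card V * p)) ^ (η + 1) * ρ) ^ m := by
  have : IsProbabilityMeasure μ := hX.indep.isProbabilityMeasure
  have hwalks (ω : Ω) : ((sym2Matrix (X · ω) ^ (η + 1) *ᵥ (S : Set V).indicator 1) u) ^ (2 * m) =
      ∑ W : Fin (2 * m * (η + 1)) → V, (∏ t, X (stepEdge u W t) ω) *
        ∏ i : Fin (2 * m), (S : Set V).indicator 1 (W (finProdFinEquiv (i, Fin.last η))) :=
    pow_mulVec_apply_pow_eq_sum_walks _ _ η (2 * m) u
  have hintegrable (W : Fin (2 * m * (η + 1)) → V) := hX.integrable_prod (stepEdge u W)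
  have hterm (W : Fin (2 * m * (η + 1)) → V) : (∫ ω, ∏ t, X (stepEdge u W t) ω ∂μ) *
      ∏ i : Fin (2 * m), (S : Set V).indicator 1 (W (finProdFinEquiv (i, Fin.last η))) ≤
      (∏ t, stepWeight u S D ρ W t) *
        ((D * (Fintype.card V * p)) ^ (m * (η + 1)) * ρ ^ m) := by
    by_cases hend : ∀ i, W (finProdFinEquiv (i, Fin.last η)) ∈ S
    · rw [prod_eq_one fun i _ => Set.indicator_of_mem (mem_coe.2 (hend i)) _, mul_one]
      exact (le_abs_self _).trans
        (hX.abs_integral_prod_stepEdge_le hp0 hp1 u hD hρ hρ1 hDn hgain hend)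
    · push Not at hend
      obtain ⟨i, hi⟩ := hend
      rw [prod_eq_zero (mem_univ i) (Set.indicator_of_notMem (mem_coe.not.2 hi) _), mul_zero]
      have := prod_nonneg (s := univ) fun t _ => stepWeight_nonneg u S hD.le hρ.le W t
      positivity
  simp only [hwalks]
  refine ⟨integrable_finsetSum _ fun W _ => (hintegrable W).mul_const _, ?_⟩
  rw [integral_finsetSum _ fun W _ => (hintegrable W).mul_const _]
  simp only [integral_mul_const]
  calc _ ≤ ∑ W : Fin (2 * m * (η + 1)) → V, (∏ t, stepWeight u S D ρ W t) *
        ((D * (Fintype.card V * p)) ^ (m * (η + 1)) * ρ ^ m) := sum_le_sum fun W _ => hterm W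
    _ ≤ 3 ^ (2 * m * (η + 1)) * ((D * (Fintype.card V * p)) ^ (m * (η + 1)) * ρ ^ m) := by
        rw [← sum_mul]
        gcongr
        exact sum_prod_stepWeight_le u hρ hS hD.le (by exact_mod_cast hm)
    _ = ((9 * D * (Fintype.card V * p)) ^ (η + 1) * ρ) ^ m := by
        rw [mul_pow _ ρ, ← pow_mul, mul_comm (η + 1) m, mul_assoc 9, mul_pow 9, mul_assoc 2,
          pow_mul]
        norm_num [mul_assoc]

end Moments

section Tails

variable {Ω : Type*} [MeasurableSpace Ω] {μ : Measure Ω}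

lemma measureReal_exp_mul_lt_sq_le [IsFiniteMeasure μ] {Y : Ω → ℝ} {K : ℝ} (hK : 0 < K) {m : ℕ}
    (h_int : Integrable (fun ω => Y ω ^ (2 * m)) μ) (hmoment : ∫ ω, Y ω ^ (2 * m) ∂μ ≤ K ^ m)
    (a : ℝ) : μ.real {ω | Real.exp a * K < Y ω ^ 2} ≤ Real.exp (-(a * m)) := by
  have hmarkov := (mul_meas_ge_le_integral_of_nonneg
    (.of_forall fun ω => (even_two_mul m).pow_nonneg (Y ω)) h_int ((Real.exp a * K) ^ m)).trans
    hmoment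
  have hexp : (Real.exp a * K) ^ m = Real.exp (a * m) * K ^ m := by
    rw [mul_pow, ← Real.exp_nat_mul, mul_comm (m : ℝ)]
  calc μ.real {ω | Real.exp a * K < Y ω ^ 2}
      ≤ μ.real {ω | (Real.exp a * K) ^ m ≤ Y ω ^ (2 * m)} :=
        measureReal_mono fun ω hω => by
          rw [Set.mem_ofPred_eq, pow_mul]
          exact pow_le_pow_left₀ (by positivity) (le_of_lt hω) m
    _ ≤ K ^ m / (Real.exp (a * m) * K ^ m) := by
        rw [← hexp, le_div_iff₀' (by positivity)]
        exact hmarkov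
    _ = Real.exp (-(a * m)) := by
        rw [Real.exp_neg]
        field_simp

variable {V : Type*} [Fintype V] [DecidableEq V]

-- The moment of order `2 * ⌈log n⌉` suffices for a polynomially small probability.
theorem IsCenteredNoise.measureReal_lt_sq_pow_mulVec_indicator_le {X : Sym2 V → Ω → ℝ} {p : ℝ}
    (hX : IsCenteredNoise X p μ) (hp0 : 0 < p) (hp1 : p ≤ 1) (hl : 3 ≤ Real.log (Fintype.card V))
    (u : V) {S : Finset V} {ρ : ℝ} (hρ : 0 < ρ) (hρ1 : ρ ≤ 1) (hgain : ρ = 1 ∨ u ∉ S)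
    (hS : #S ≤ ρ * Fintype.card V)
    (hlp : 4 * Real.log (Fintype.card V) ^ 2 ≤ ρ * (Fintype.card V * p)) {η : ℕ}
    (hη : η ≤ Real.log (Fintype.card V)) :
    μ.real {ω | Real.exp 6 *
        ((36 * Real.log (Fintype.card V) ^ 2 * (Fintype.card V * p)) ^ (η + 1) * ρ) <
      ((sym2Matrix (X · ω) ^ (η + 1) *ᵥ (S : Set V).indicator 1) u) ^ 2} ≤
      1 / Fintype.card V ^ 6 := by
  set l := Real.log (Fintype.card V) with hlV
  have : IsProbabilityMeasure μ := hX.indep.isProbabilityMeasure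
  have : Nonempty V := ⟨u⟩
  have hV : 0 < (Fintype.card V : ℝ) := by exact_mod_cast Fintype.card_pos
  have hlceil : l ≤ ⌈l⌉₊ := Nat.le_ceil l
  have hlength : 2 * ⌈l⌉₊ * (η + 1) ≤ 4 * l ^ 2 := by
    have hceil : (⌈l⌉₊ : ℝ) ≤ l + 1 := (Nat.ceil_lt_add_one (by linarith)).le
    calc 2 * (⌈l⌉₊ : ℝ) * (η + 1) ≤ 2 * (l + 1) * (l + 1) := by gcongr
      _ ≤ 4 * l ^ 2 := by nlinarith
  obtain ⟨h_int, hmoment⟩ := hX.integral_pow_mulVec_indicator_le hp0.le hp1 u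
    (show 0 < 4 * l ^ 2 by positivity) hρ hρ1 hlp hgain hS hlength
  rw [← mul_assoc 9, show (9 * 4 : ℝ) = 36 by norm_num] at hmoment
  calc _ ≤ Real.exp (-(6 * ⌈l⌉₊)) := measureReal_exp_mul_lt_sq_le (by positivity) h_int hmoment 6
    _ ≤ Real.exp (-(6 * l)) := by gcongr
    _ = 1 / Fintype.card V ^ 6 := by
        rw [Real.exp_neg, hlV, one_div, show (6 : ℝ) = (6 : ℕ) by norm_num, Real.exp_nat_mul,
          Real.exp_log hV]

lemma ofReal_one_sub_le_measure_forall_mem [IsProbabilityMeasure μ] {ι : Type*} {s : Finset ι}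
    {P : ι → Ω → Prop} {δ : ℝ} (hP : ∀ i ∈ s, μ.real {ω | ¬ P i ω} ≤ δ) :
    ENNReal.ofReal (1 - #s * δ) ≤ μ {ω | ∀ i ∈ s, P i ω} := by
  have hbad : μ.real (⋃ i ∈ s, {ω | ¬ P i ω}) ≤ #s * δ :=
    (measureReal_biUnion_finset_le _ _).trans ((sum_le_card_nsmul _ _ _ hP).trans_eq
      (nsmul_eq_mul _ _))
  have hcover : (⋃ i ∈ s, {ω | ¬ P i ω}) ∪ {ω | ∀ i ∈ s, P i ω} = Set.univ := by
    ext ω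
    simp only [Set.mem_union, Set.mem_iUnion, Set.mem_ofPred_eq, exists_prop, Set.mem_univ,
      iff_true]
    by_contra! h
    exact h.2.elim fun i hi => hi.2 (h.1 i hi.1)
  have htotal := measureReal_union_le (μ := μ) (⋃ i ∈ s, {ω | ¬ P i ω}) {ω | ∀ i ∈ s, P i ω}
  rw [hcover, probReal_univ] at htotal
  exact ENNReal.ofReal_le_of_le_toReal (show _ ≤ μ.real _ by linarith)

end Tails

section NoiseModel

variable {n k : ℕ} {p q : ℝ} {cl : Fin n → Fin k}

lemma meanMatrix_apply (u v : Fin n) :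
    meanMatrix n k p q cl u v = if cl u = cl v then p else q := rfl

lemma meanMatrix_nonneg (hq : 0 ≤ q) (hpq : q ≤ p) (u v : Fin n) :
    0 ≤ meanMatrix n k p q cl u v := by
  rw [meanMatrix_apply]
  split_ifs <;> linarith

lemma meanMatrix_le (hpq : q ≤ p) (u v : Fin n) : meanMatrix n k p q cl u v ≤ p := by
  rw [meanMatrix_apply]
  split_ifs <;> linarith

namespace NoiseModel

variable {Ω : Type*} [MeasureSpace Ω] {E : Ω → Matrix (Fin n) (Fin n) ℝ}

lemma integral_comp (hE : NoiseModel p q cl E) {u v : Fin n} (huv : u ≤ v)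
    (hG0 : 0 ≤ meanMatrix n k p q cl u v) (hG1 : meanMatrix n k p q cl u v ≤ 1)
    {f : ℝ → ℝ} (hf : Measurable f) :
    ∫ ω, f (E ω u v) = meanMatrix n k p q cl u v * f (1 - meanMatrix n k p q cl u v) +
      (1 - meanMatrix n k p q cl u v) * f (-meanMatrix n k p q cl u v) := by
  obtain ⟨-, hmeas, -, hmap⟩ := hE
  have h_int (a x : ℝ) : Integrable f (ENNReal.ofReal a • Measure.dirac x) :=
    (integrable_dirac enorm_lt_top).smul_measure ENNReal.ofReal_ne_top
  rw [← integral_map (φ := fun ω => E ω u v) (hmeas u v).aemeasurable hf.aestronglyMeasurable,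
    hmap u v huv, integral_add_measure (h_int _ _) (h_int _ _), integral_smul_measure,
    integral_smul_measure, integral_dirac, integral_dirac, ENNReal.toReal_ofReal hG0,
    ENNReal.toReal_ofReal (sub_nonneg.2 hG1), smul_eq_mul, smul_eq_mul]

lemma ae_abs_le_one (hE : NoiseModel p q cl E) {u v : Fin n} (huv : u ≤ v)
    (hG0 : 0 ≤ meanMatrix n k p q cl u v) (hG1 : meanMatrix n k p q cl u v ≤ 1) :
    ∀ᵐ ω, |E ω u v| ≤ 1 := by
  obtain ⟨-, hmeas, -, hmap⟩ := hE
  have hs : MeasurableSet {x : ℝ | |x| ≤ 1} := measurableSet_le (by fun_prop) (by fun_prop)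
  rw [← ae_map_iff (f := fun ω => E ω u v) (p := fun x => |x| ≤ 1) (hmeas u v).aemeasurable hs,
    hmap u v huv, ae_add_measure_iff]
  constructor <;> refine Measure.ae_smul_measure ((ae_dirac_iff hs).2 (abs_le.2 ?_)) _ <;>
    constructor <;> linarith

theorem exists_isCenteredNoise (hE : NoiseModel p q cl E) (hq : 0 ≤ q) (hpq : q ≤ p)
    (hp : p ≤ 1) :
    ∃ X : Sym2 (Fin n) → Ω → ℝ, IsCenteredNoise X p ℙ ∧ E = fun ω => sym2Matrix (X · ω) := by
  have hG0 (u v : Fin n) := meanMatrix_nonneg (cl := cl) hq hpq u v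
  have hGp (u v : Fin n) := meanMatrix_le (cl := cl) hpq u v
  refine ⟨fun e ω => E ω e.inf e.sup, ⟨?_, fun e => (hE.2.1 _ _).aemeasurable,
    fun e => hE.ae_abs_le_one (e.inf_le_sup) (hG0 _ _) ((hGp _ _).trans hp), fun e => ?_,
    fun e => ?_⟩, ?_⟩
  · exact hE.2.2.1.precomp (g := Sym2.sortEquiv) Sym2.sortEquiv.injective
  · refine (hE.integral_comp e.inf_le_sup (hG0 _ _) ((hGp _ _).trans hp) measurable_id).trans ?_
    simp only [id]
    ring
  · refine (hE.integral_comp e.inf_le_sup (hG0 _ _) ((hGp _ _).trans hp)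
      (measurable_id.pow_const 2)).trans_le ?_
    simp only [id]
    nlinarith [hGp e.inf e.sup, sq_nonneg (meanMatrix n k p q cl e.inf e.sup)]
  · ext ω u v
    rcases le_total u v with h | h <;>
      simp [sym2Matrix, Sym2.inf_mk, Sym2.sup_mk, h, (hE.1 ω).apply]

end NoiseModel

end NoiseModel

section EuclideanNorm

variable {m : Type*} [Fintype m]

lemma enorm_eq_norm_toLp (x : m → ℝ) : enorm x = ‖WithLp.toLp 2 x‖ := by
  simp only [EuclideanSpace.norm_eq, enorm, Real.norm_eq_abs, sq_abs]

lemma enorm_nonneg (x : m → ℝ) : 0 ≤ enorm x := Real.sqrt_nonneg _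

lemma enorm_sq (x : m → ℝ) : enorm x ^ 2 = x ⬝ᵥ x := by
  rw [enorm, Real.sq_sqrt (sum_nonneg fun _ _ => sq_nonneg _)]
  simp only [dotProduct, sq]

lemma enorm_add_le (x y : m → ℝ) : enorm (x + y) ≤ enorm x + enorm y := by
  simp only [enorm_eq_norm_toLp, WithLp.toLp_add]
  exact norm_add_le _ _

lemma enorm_smul (a : ℝ) (x : m → ℝ) : enorm (a • x) = |a| * enorm x := by
  simp only [enorm_eq_norm_toLp, WithLp.toLp_smul, norm_smul, Real.norm_eq_abs]

end EuclideanNorm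

namespace IsSpectralDecomp

variable {n : ℕ} {A : Matrix (Fin n) (Fin n) ℝ} {lam : Fin n → ℝ} {v : Fin n → Fin n → ℝ}

lemma dotProduct_eq_ite (h : IsSpectralDecomp A lam v) (i j : Fin n) :
    v i ⬝ᵥ v j = if i = j then 1 else 0 :=
  h.2.1 i j

lemma sum_dotProduct_sq (h : IsSpectralDecomp A lam v) (z : Fin n → ℝ) :
    ∑ i, (v i ⬝ᵥ z) ^ 2 = enorm z ^ 2 := by
  have horth : (of v)ᵀ * of v = 1 := mul_eq_one_comm.1 <| by
    ext i j
    rw [mul_apply, one_apply]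
    exact h.dotProduct_eq_ite i j
  have hcoord : ∑ i, (v i ⬝ᵥ z) ^ 2 = (of v *ᵥ z) ⬝ᵥ (of v *ᵥ z) := by
    simp only [dotProduct, mulVec, of_apply, sq]
  rw [hcoord, dotProduct_mulVec, ← mulVec_transpose, mulVec_mulVec, horth, one_mulVec, enorm_sq]

lemma vecMul_eq_sum (h : IsSpectralDecomp A lam v) (z : Fin n → ℝ) :
    z ᵥ* A = ∑ j, (lam j * (v j ⬝ᵥ z)) • v j := by
  conv_lhs => rw [h.2.2, vecMul_sum]
  refine sum_congr rfl fun j _ => ?_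
  rw [vecMul_smul, vecMul_vecMulVec, smul_smul, dotProduct_comm z]

lemma dotProduct_vecMul (h : IsSpectralDecomp A lam v) (z : Fin n → ℝ) (i : Fin n) :
    v i ⬝ᵥ (z ᵥ* A) = lam i * (v i ⬝ᵥ z) := by
  rw [h.vecMul_eq_sum, dotProduct_sum]
  simp only [dotProduct_smul, h.dotProduct_eq_ite, smul_eq_mul, mul_ite, mul_one, mul_zero,
    sum_ite_eq, mem_univ, if_true]

lemma nonneg (h : IsSpectralDecomp A lam v) (hA : ∀ z, 0 ≤ z ⬝ᵥ (z ᵥ* A)) (i : Fin n) :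
    0 ≤ lam i := by
  simpa only [h.dotProduct_vecMul, h.dotProduct_eq_ite, if_true, mul_one] using hA (v i)

lemma trace_eq_sum (h : IsSpectralDecomp A lam v) : A.trace = ∑ i, lam i := by
  conv_lhs => rw [h.2.2]
  simp only [trace_sum, trace_smul, trace_vecMulVec, h.dotProduct_eq_ite, if_true, smul_eq_mul,
    mul_one]

lemma head_pos (h : IsSpectralDecomp A lam v) (hn : 0 < n) (hA : 0 < A.trace) :
    0 < lam ⟨0, hn⟩ := by
  rw [h.trace_eq_sum] at hA
  obtain ⟨i, -, hi⟩ := exists_lt_of_sum_lt (s := univ) (f := fun _ => (0 : ℝ)) (by simpa using hA)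
  exact lt_of_lt_of_le hi (h.1 (Nat.zero_le i.1))

-- Courant–Fischer: some nonzero combination of `v i` and `v j` is orthogonal to `w`.
lemma le_of_forall_orthogonal_le (h : IsSpectralDecomp A lam v) {w : Fin n → ℝ} {B : ℝ}
    (hB : ∀ z, w ⬝ᵥ z = 0 → z ⬝ᵥ (z ᵥ* A) ≤ B * (z ⬝ᵥ z)) {i j : Fin n} (hij : i < j) :
    lam j ≤ B := by
  obtain ⟨a, b, hab, horth⟩ : ∃ a b : ℝ, 0 < a ^ 2 + b ^ 2 ∧ w ⬝ᵥ (a • v i + b • v j) = 0 := by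
    simp only [dotProduct_add, dotProduct_smul, smul_eq_mul]
    by_cases hw : w ⬝ᵥ v j = 0
    · exact ⟨0, 1, by norm_num, by rw [hw]; ring⟩
    · exact ⟨w ⬝ᵥ v j, -(w ⬝ᵥ v i), by positivity, by ring⟩
  have hquad := hB _ horth
  simp only [add_dotProduct, smul_dotProduct, h.dotProduct_vecMul, dotProduct_add,
    dotProduct_smul, h.dotProduct_eq_ite, hij.ne, hij.ne', if_true, if_false, smul_eq_mul, mul_one,
    mul_zero, add_zero, zero_add] at hquad
  have hle : lam j ≤ lam i := h.1 hij.le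
  refine le_of_mul_le_mul_left (a := a ^ 2 + b ^ 2) ?_ hab
  nlinarith [mul_le_mul_of_nonneg_left hle (sq_nonneg a)]

lemma enorm_vecMul_le (h : IsSpectralDecomp A lam v) {N : Matrix (Fin n) (Fin n) ℝ}
    {f : Fin n → ℝ} {K : ℝ} (hK0 : 0 ≤ K) (hK : ∀ i, |f i| ≤ K) {z : Fin n → ℝ}
    (hN : ∀ i, v i ⬝ᵥ (z ᵥ* N) = f i * (v i ⬝ᵥ z)) :
    enorm (z ᵥ* N) ≤ K * enorm z := by
  refine le_of_pow_le_pow_left₀ two_ne_zero (mul_nonneg hK0 (enorm_nonneg z)) ?_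
  rw [mul_pow, ← h.sum_dotProduct_sq, ← h.sum_dotProduct_sq, mul_sum]
  refine sum_le_sum fun i _ => ?_
  rw [hN, mul_pow]
  exact mul_le_mul_of_nonneg_right (sq_le_sq' (abs_le.1 (hK i)).1 (abs_le.1 (hK i)).2)
    (sq_nonneg _)

lemma dotProduct_vecMul_psiM (h : IsSpectralDecomp A lam v) (lam1 mu : ℝ) (z : Fin n → ℝ)
    (i : Fin n) : v i ⬝ᵥ (z ᵥ* psiM lam1 mu A) = psiR lam1 mu (lam i) * (v i ⬝ᵥ z) := by
  simp only [psiM, psiR, vecMul_add, vecMul_smul, ← vecMul_vecMul, dotProduct_add,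
    dotProduct_smul, h.dotProduct_vecMul, smul_eq_mul]
  ring

end IsSpectralDecomp

lemma abs_psiR_le_three {lam1 mu t : ℝ} (hlam : 0 < lam1) (hmu : 0 < mu) (ht0 : 0 ≤ t)
    (ht : t ≤ lam1) (htop : t = lam1 ∨ t ≤ 2 * mu) : |psiR lam1 mu t| ≤ 3 := by
  have hpsi : psiR lam1 mu t = t / lam1 + t / mu * (1 - t / lam1) := by
    rw [psiR]
    field_simp
    ring
  have hratio0 : 0 ≤ t / lam1 := by positivity
  have hratio1 : t / lam1 ≤ 1 := (div_le_one hlam).2 ht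
  have hgap : 0 ≤ t / mu * (1 - t / lam1) := mul_nonneg (by positivity) (by linarith)
  rw [hpsi, abs_of_nonneg (add_nonneg hratio0 hgap)]
  rcases htop with rfl | htop
  · norm_num [div_self hlam.ne']
  · have hmu2 : t / mu ≤ 2 := (div_le_iff₀ hmu).2 htop
    nlinarith

section ClusterSums

variable {n k : ℕ} {p q : ℝ} {cl : Fin n → Fin k}

/-- The sum of `z` over the cluster `c`. -/
def clusterSum (cl : Fin n → Fin k) (z : Fin n → ℝ) (c : Fin k) : ℝ :=
  ∑ v with cl v = c, z v

lemma clusterSum_comp (f : Fin k → ℝ) (c : Fin k) :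
    clusterSum cl (fun v => f (cl v)) c = clusterSize cl c * f c := by
  rw [clusterSum, sum_congr rfl fun v hv => by rw [(mem_filter.1 hv).2], sum_const, nsmul_eq_mul,
    clusterSize]

lemma sum_clusterSum (z : Fin n → ℝ) : ∑ c, clusterSum cl z c = ∑ v, z v :=
  sum_fiberwise _ _ _

lemma sum_clusterSum_mul (z : Fin n → ℝ) (f : Fin k → ℝ) :
    ∑ c, clusterSum cl z c * f c = ∑ v, z v * f (cl v) := by
  rw [← sum_clusterSum (cl := cl)]
  refine sum_congr rfl fun c _ => ?_
  rw [clusterSum, sum_mul]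
  exact sum_congr rfl fun v hv => congrArg (z v * f ·) (mem_filter.1 hv).2.symm

lemma sum_clusterSum_sq_le {B : ℝ} (hB : ∀ c, clusterSize cl c ≤ B) (z : Fin n → ℝ) :
    ∑ c, clusterSum cl z c ^ 2 ≤ B * (z ⬝ᵥ z) := by
  rw [← enorm_sq, enorm, Real.sq_sqrt (sum_nonneg fun _ _ => sq_nonneg _),
    ← sum_clusterSum (cl := cl), mul_sum]
  refine sum_le_sum fun c _ => sq_sum_le_card_mul_sum_sq.trans ?_
  exact mul_le_mul_of_nonneg_right (hB c) (sum_nonneg fun v _ => sq_nonneg (z v))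

lemma vecMul_meanMatrix_apply (z : Fin n → ℝ) (w : Fin n) :
    (z ᵥ* meanMatrix n k p q cl) w = q * ∑ v, z v + (p - q) * clusterSum cl z (cl w) := by
  rw [vecMul, dotProduct, clusterSum, sum_filter, mul_sum, mul_sum, ← sum_add_distrib]
  refine sum_congr rfl fun v _ => ?_
  rw [meanMatrix_apply]
  split_ifs <;> ring

lemma dotProduct_vecMul_meanMatrix_self (z : Fin n → ℝ) :
    z ⬝ᵥ (z ᵥ* meanMatrix n k p q cl) =
      q * (∑ v, z v) ^ 2 + (p - q) * ∑ c, clusterSum cl z c ^ 2 := by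
  have hsum := sum_clusterSum_mul (cl := cl) z fun c => (p - q) * clusterSum cl z c
  simp only [dotProduct, vecMul_meanMatrix_apply, mul_add, sum_add_distrib, ← sum_mul, ← hsum,
    mul_sum (a := p - q)]
  congr 1
  · ring
  · simp only [sq]
    exact sum_congr rfl fun c _ => mul_left_comm _ _ _

lemma trace_meanMatrix : (meanMatrix n k p q cl).trace = n * p := by
  simp [trace, meanMatrix_apply]

/-- The projection of `y` onto the vectors that are constant on clusters. -/
noncomputable def clusterAvg (cl : Fin n → Fin k) (y : Fin n → ℝ) : Fin n → ℝ :=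
  fun v => clusterSum cl y (cl v) / clusterSize cl (cl v)

lemma clusterSum_clusterAvg (y : Fin n → ℝ) (c : Fin k) :
    clusterSum cl (clusterAvg cl y) c = clusterSum cl y c := by
  refine (clusterSum_comp (fun c => clusterSum cl y c / clusterSize cl c) c).trans
    (mul_div_cancel_of_imp' fun hc => ?_)
  rw [Nat.cast_eq_zero, clusterSize, card_eq_zero] at hc
  rw [clusterSum, hc, sum_empty]

lemma enorm_clusterAvg_sq (y : Fin n → ℝ) :
    enorm (clusterAvg cl y) ^ 2 = ∑ c, clusterSum cl y c ^ 2 / clusterSize cl c := by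
  rw [enorm_sq, dotProduct]
  refine (sum_clusterSum_mul (clusterAvg cl y)
    fun c => clusterSum cl y c / clusterSize cl c).symm.trans (sum_congr rfl fun c _ => ?_)
  rw [clusterSum_clusterAvg, sq, mul_div_assoc]

lemma clusterAvg_vecMul_meanMatrix (y : Fin n → ℝ) :
    clusterAvg cl y ᵥ* meanMatrix n k p q cl = y ᵥ* meanMatrix n k p q cl := by
  ext w
  simp only [vecMul_meanMatrix_apply, ← sum_clusterSum (cl := cl), clusterSum_clusterAvg]

end ClusterSums

section MeanMatrixSpectrum

variable {n k : ℕ} {p q : ℝ} {cl : Fin n → Fin k} {lam : Fin n → ℝ} {v : Fin n → Fin n → ℝ}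

lemma eigenvalue_meanMatrix_nonneg (hq : 0 ≤ q) (hpq : q ≤ p)
    (hd : IsSpectralDecomp (meanMatrix n k p q cl) lam v) (i : Fin n) : 0 ≤ lam i := by
  refine hd.nonneg (fun z => ?_) i
  rw [dotProduct_vecMul_meanMatrix_self]
  have := sub_nonneg.2 hpq
  positivity

lemma eigenvalue_meanMatrix_le_of_lt (hpq : q ≤ p) {B : ℝ} (hB : ∀ c, clusterSize cl c ≤ B)
    (hd : IsSpectralDecomp (meanMatrix n k p q cl) lam v) {i j : Fin n} (hij : i < j) :
    lam j ≤ (p - q) * B := by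
  refine hd.le_of_forall_orthogonal_le (w := 1) (fun z hz => ?_) hij
  rw [one_dotProduct] at hz
  rw [dotProduct_vecMul_meanMatrix_self, hz, mul_assoc]
  simpa using mul_le_mul_of_nonneg_left (sum_clusterSum_sq_le hB z) (sub_nonneg.2 hpq)

lemma enorm_vecMul_meanMatrix_le (hn : 0 < n) (hq : 0 ≤ q) (hpq : q ≤ p)
    (hd : IsSpectralDecomp (meanMatrix n k p q cl) lam v) (y : Fin n → ℝ) :
    enorm (y ᵥ* meanMatrix n k p q cl) ≤ lam ⟨0, hn⟩ * enorm (clusterAvg cl y) := by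
  have hnonneg := eigenvalue_meanMatrix_nonneg hq hpq hd
  rw [← clusterAvg_vecMul_meanMatrix]
  refine hd.enorm_vecMul_le (hnonneg _) (fun i => ?_) (hd.dotProduct_vecMul _)
  rw [abs_of_nonneg (hnonneg i)]
  exact hd.1 (Nat.zero_le i)

lemma enorm_vecMul_psiM_meanMatrix_le (hn : 0 < n) (hq : 0 ≤ q) (hpq : q < p) {B : ℝ}
    (hB0 : 0 < B) (hB : ∀ c, clusterSize cl c ≤ 2 * B)
    (hd : IsSpectralDecomp (meanMatrix n k p q cl) lam v) (y : Fin n → ℝ) :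
    enorm (y ᵥ* psiM (lam ⟨0, hn⟩) ((p - q) * B) (meanMatrix n k p q cl)) ≤
      3 * enorm (clusterAvg cl y) := by
  have htop : 0 < lam ⟨0, hn⟩ := hd.head_pos hn <| by
    rw [trace_meanMatrix]
    have : 0 < p := hq.trans_lt hpq
    positivity
  have havg : y ᵥ* psiM (lam ⟨0, hn⟩) ((p - q) * B) (meanMatrix n k p q cl) =
      clusterAvg cl y ᵥ* psiM (lam ⟨0, hn⟩) ((p - q) * B) (meanMatrix n k p q cl) := by
    simp only [psiM, vecMul_add, vecMul_smul, ← vecMul_vecMul, clusterAvg_vecMul_meanMatrix]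
  rw [havg]
  refine hd.enorm_vecMul_le (by norm_num) (fun i => ?_) (hd.dotProduct_vecMul_psiM _ _ _)
  refine abs_psiR_le_three htop (mul_pos (sub_pos.2 hpq) hB0)
    (eigenvalue_meanMatrix_nonneg hq hpq.le hd i) (hd.1 (Nat.zero_le i)) ?_
  rcases eq_or_ne i ⟨0, hn⟩ with rfl | hi
  · exact Or.inl rfl
  · right
    rw [mul_left_comm]
    exact eigenvalue_meanMatrix_le_of_lt hpq.le hB hd
      (lt_of_le_of_ne (Nat.zero_le i : (⟨0, hn⟩ : Fin n) ≤ i) hi.symm)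

end MeanMatrixSpectrum

lemma exp_natCast_le (m : ℕ) : Real.exp m ≤ 2.7183 ^ m := by
  rw [← mul_one (m : ℝ), Real.exp_nat_mul]
  exact pow_le_pow_left₀ (Real.exp_nonneg 1) (Real.exp_one_lt_d9.le.trans (by norm_num)) m

section SpectralNorm

variable {n : ℕ} {M : Matrix (Fin n) (Fin n) ℝ}

lemma specNorm_nonneg : 0 ≤ specNorm M := norm_nonneg _

lemma enorm_vecMul_le_specNorm (hM : M.IsSymm) (x : Fin n → ℝ) :
    enorm (x ᵥ* M) ≤ specNorm M * enorm x := by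
  rw [← mulVec_transpose, hM.eq, enorm_eq_norm_toLp, enorm_eq_norm_toLp]
  exact (Matrix.toEuclideanCLM (𝕜 := ℝ) M).le_opNorm (WithLp.toLp 2 x)

lemma specNorm_le_of_sq_apply_le {b : ℝ} (hb : 0 ≤ b) (hM : ∀ u v, M u v ^ 2 ≤ b ^ 2) :
    specNorm M ≤ n * b := by
  refine ContinuousLinearMap.opNorm_le_bound _ (by positivity) fun x => ?_
  change ‖WithLp.toLp 2 (M *ᵥ x.ofLp)‖ ≤ n * b * ‖WithLp.toLp 2 x.ofLp‖
  simp only [← enorm_eq_norm_toLp]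
  have hnonneg := enorm_nonneg x.ofLp
  refine Real.sqrt_le_iff.2 ⟨by positivity, ?_⟩
  have hrow (u : Fin n) : (M *ᵥ x.ofLp) u ^ 2 ≤ n * b ^ 2 * enorm x.ofLp ^ 2 := by
    rw [enorm, Real.sq_sqrt (sum_nonneg fun _ _ => sq_nonneg _)]
    refine (sum_mul_sq_le_sq_mul_sq univ (M u) x.ofLp).trans ?_
    gcongr
    exact (sum_le_card_nsmul _ _ _ fun v _ => hM u v).trans_eq (by simp)
  exact (sum_le_card_nsmul _ _ _ fun u _ => hrow u).trans_eq (by simp; ring)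

lemma specNorm_pow_two_pow (hM : M.IsSymm) (j : ℕ) :
    specNorm (M ^ 2 ^ j) = specNorm M ^ 2 ^ j := by
  rw [specNorm, specNorm, map_pow]
  refine IsSelfAdjoint.norm_pow_two_pow ?_ j
  rw [IsSelfAdjoint, ← map_star, star_eq_conjTranspose, conjTranspose_eq_transpose_of_trivial,
    hM.eq]

-- The factor `n` lost in passing from entries to the norm becomes a constant after taking a root
-- of order `log n`.
lemma specNorm_le_of_sq_pow_apply_le (hM : M.IsSymm) (hl : 1 ≤ Real.log n) {T : ℝ} (hT : 0 ≤ T)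
    (h : ∀ m : ℕ, m ≤ Real.log n → ∀ u v,
      ((M ^ (m + 1)) u v) ^ 2 ≤ Real.exp 6 * (T ^ 2) ^ (m + 1)) :
    specNorm M ≤ 150 * T := by
  have hn : (0 : ℝ) < n := by
    by_contra! hn
    linarith [Real.log_nonpos (Nat.cast_nonneg n) (hn.trans zero_le_one)]
  obtain ⟨j, hj_le, hlt_j⟩ := exists_nat_pow_near hl one_lt_two
  obtain ⟨m, hm⟩ : ∃ m, 2 ^ j = m + 1 := Nat.exists_eq_add_one.2 (by positivity)
  have hcast : (2 : ℝ) ^ j = m + 1 := by exact_mod_cast hm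
  have hn_le : n ≤ Real.exp 2 ^ (m + 1) := by
    rw [← Real.exp_nat_mul, ← Real.log_le_iff_le_exp hn]
    push_cast
    rw [pow_succ, hcast] at hlt_j
    exact hlt_j.le
  have hexp : Real.exp 3 ≤ Real.exp 3 ^ (m + 1) :=
    le_self_pow₀ (Real.one_le_exp (by norm_num)) m.succ_ne_zero
  have hentries := specNorm_le_of_sq_apply_le (M := M ^ (m + 1)) (b := Real.exp 3 * T ^ (m + 1))
    (by positivity) fun u v => (h m (by linarith) u v).trans_eq (by
      rw [mul_pow, ← Real.exp_nat_mul, pow_right_comm]; norm_num)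
  rw [← hm, specNorm_pow_two_pow hM, hm] at hentries
  have hroot : specNorm M ≤ Real.exp 5 * T := by
    refine le_of_pow_le_pow_left₀ m.succ_ne_zero (by positivity) (hentries.trans ?_)
    calc n * (Real.exp 3 * T ^ (m + 1))
        ≤ Real.exp 2 ^ (m + 1) * (Real.exp 3 ^ (m + 1) * T ^ (m + 1)) := by gcongr
      _ = (Real.exp 5 * T) ^ (m + 1) := by
          rw [← mul_pow, ← mul_pow, ← mul_assoc, ← Real.exp_add]
          norm_num
  refine hroot.trans (mul_le_mul_of_nonneg_right ((exp_natCast_le 5).trans ?_) hT)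
  norm_num

end SpectralNorm

section WalkBounds

variable {n k : ℕ} {p q : ℝ} {cl : Fin n → Fin k} {M : Matrix (Fin n) (Fin n) ℝ}

/-- The vertex sets at which the walks counted by powers of the noise are tested to end: the
clusters and the singletons. -/
def testSet (cl : Fin n → Fin k) : Fin k ⊕ Fin n → Finset (Fin n)
  | .inl c => {v | cl v = c}
  | .inr v => {v}

/-- The factor gained by a walk that has to reach a test set: up to a constant the density of a
cluster not containing the start `u`, and `1` for the other test sets. -/
noncomputable def testDensity (cl : Fin n → Fin k) (u : Fin n) : Fin k ⊕ Fin n → ℝ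
  | .inl c => if c = cl u then 1 else 2 / k
  | .inr _ => 1

/-- The good event of the proof: walks of every length up to `log n + 1` into every test set
have total weight at most of order `√B` per step. -/
def HasWalkBounds (cl : Fin n → Fin k) (B : ℝ) (M : Matrix (Fin n) (Fin n) ℝ) : Prop :=
  ∀ j : ℕ, j ≤ Real.log n → ∀ u a,
    ((M ^ (j + 1) *ᵥ (testSet cl a : Set (Fin n)).indicator 1) u) ^ 2 ≤
      Real.exp 6 * (B ^ (j + 1) * testDensity cl u a)

lemma clusterSum_row (u : Fin n) (c : Fin k) :
    clusterSum cl (M u) c = (M *ᵥ (testSet cl (.inl c) : Set (Fin n)).indicator 1) u := by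
  simp [clusterSum, testSet, mulVec, dotProduct, Set.indicator_apply, sum_filter]

lemma HasWalkBounds.specNorm_le {T : ℝ} (h : HasWalkBounds cl (T ^ 2) M) (hM : M.IsSymm)
    (hl : 1 ≤ Real.log n) (hT : 0 ≤ T) : specNorm M ≤ 150 * T :=
  specNorm_le_of_sq_pow_apply_le hM hl hT fun m hm u v => by
    simpa [testSet, testDensity, mulVec, dotProduct, Set.indicator_apply] using h m hm u (.inr v)

lemma HasWalkBounds.enorm_clusterAvg_sq_le {B : ℝ} (h : HasWalkBounds cl B M) (hB : 0 ≤ B)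
    (hsize : ∀ c, (n : ℝ) / (2 * k) ≤ clusterSize cl c) {m : ℕ} (hm : m ≤ Real.log n)
    (u : Fin n) :
    enorm (clusterAvg cl ((M ^ (m + 1)) u)) ^ 2 ≤ 6 * (k / n) * (Real.exp 6 * B ^ (m + 1)) := by
  have hn : (0 : ℝ) < n := by exact_mod_cast u.pos
  have hk : (0 : ℝ) < k := by exact_mod_cast (cl u).pos
  set W := Real.exp 6 * B ^ (m + 1)
  have hW : 0 ≤ W := by positivity
  have hcluster (c : Fin k) : clusterSum cl ((M ^ (m + 1)) u) c ^ 2 / clusterSize cl c ≤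
      W * ((if c = cl u then 1 else 0) + 2 / k) / (n / (2 * k)) := by
    have hdensity : testDensity cl u (.inl c) ≤ (if c = cl u then 1 else 0) + 2 / k := by
      have : (0 : ℝ) ≤ 2 / k := by positivity
      rw [testDensity]
      split_ifs <;> linarith
    have hwalk := h m hm u (.inl c)
    rw [← clusterSum_row, ← mul_assoc] at hwalk
    replace hwalk := hwalk.trans (mul_le_mul_of_nonneg_left hdensity hW)
    exact div_le_div₀ ((sq_nonneg _).trans hwalk) hwalk (by positivity) (hsize c)
  rw [enorm_clusterAvg_sq]
  refine (sum_le_sum fun c _ => hcluster c).trans_eq ?_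
  rw [← sum_div, ← mul_sum, sum_add_distrib]
  simp only [sum_ite_eq', mem_univ, if_true, sum_const, card_univ, Fintype.card_fin, nsmul_eq_mul]
  field_simp
  ring

lemma HasWalkBounds.enorm_clusterAvg_le (hp : 0 ≤ p)
    (h : HasWalkBounds cl ((6 * Real.log n * √(n * p)) ^ 2) M)
    (hsize : ∀ c, (n : ℝ) / (2 * k) ≤ clusterSize cl c) {m : ℕ} (hm : m ≤ Real.log n)
    (u : Fin n) :
    enorm (clusterAvg cl ((M ^ (m + 1)) u)) ≤
      300 * Real.log n * √(k * p) * (6 * Real.log n * √(n * p)) ^ m := by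
  have hn : (0 : ℝ) < n := by exact_mod_cast u.pos
  have : 0 ≤ Real.log n := Real.log_natCast_nonneg n
  refine le_of_pow_le_pow_left₀ two_ne_zero (by positivity)
    ((h.enorm_clusterAvg_sq_le (sq_nonneg _) hsize hm u).trans ?_)
  have hexp : Real.exp 6 ≤ 404 := (exp_natCast_le 6).trans (by norm_num)
  have hnp : √(n * p) ^ 2 = n * p := Real.sq_sqrt (by positivity)
  have hkp : √(k * p) ^ 2 = k * p := Real.sq_sqrt (by positivity)
  set T := 6 * Real.log n * √(n * p) with hT
  have hTm : (T ^ 2) ^ (m + 1) = (T ^ m) ^ 2 * (36 * Real.log n ^ 2 * (n * p)) := by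
    rw [pow_succ, pow_right_comm, ← hnp, hT]
    ring
  calc 6 * (k / n) * (Real.exp 6 * (T ^ 2) ^ (m + 1))
      = 216 * Real.exp 6 * (Real.log n ^ 2 * √(k * p) ^ 2 * (T ^ m) ^ 2) := by
        rw [hTm, hkp]
        field_simp
        ring
    _ ≤ 90000 * (Real.log n ^ 2 * √(k * p) ^ 2 * (T ^ m) ^ 2) := by gcongr; linarith
    _ = _ := by ring

lemma enorm_row_mul_anticommutator_le (hn : 0 < n) (hq : 0 ≤ q) (hpq : q < p)
    {lam : Fin n → ℝ} {v : Fin n → Fin n → ℝ}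
    (hd : IsSpectralDecomp (meanMatrix n k p q cl) lam v) {B : ℝ} (hB : 0 < B) (hM : M.IsSymm)
    (N : Matrix (Fin n) (Fin n) ℝ) (u : Fin n) :
    enorm ((N * ((-(1 / (lam ⟨0, hn⟩ * B))) •
      (M * meanMatrix n k p q cl + meanMatrix n k p q cl * M))) u) ≤
    (enorm (clusterAvg cl ((N * M) u)) + specNorm M * enorm (clusterAvg cl (N u))) / B := by
  set G := meanMatrix n k p q cl with hG
  have htop : 0 < lam ⟨0, hn⟩ := hd.head_pos hn <| by
    rw [hG, trace_meanMatrix]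
    have : 0 < p := hq.trans_lt hpq
    positivity
  have hrow : (N * ((-(1 / (lam ⟨0, hn⟩ * B))) • (M * G + G * M))) u =
      (-(1 / (lam ⟨0, hn⟩ * B))) • ((N * M) u ᵥ* G + (N u ᵥ* G) ᵥ* M) := by
    simp only [mul_apply_eq_vecMul, vecMul_smul, vecMul_add, vecMul_vecMul]
  have hmean := enorm_vecMul_meanMatrix_le hn hq hpq.le hd
  rw [hrow, enorm_smul, abs_neg, abs_of_pos (by positivity), one_div,
    inv_mul_le_iff₀ (by positivity), mul_assoc, mul_div_cancel₀ _ hB.ne', mul_add]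
  refine (enorm_add_le _ _).trans (add_le_add (hmean _) ?_)
  refine (enorm_vecMul_le_specNorm hM _).trans ?_
  rw [mul_left_comm]
  exact mul_le_mul_of_nonneg_left (hmean _) specNorm_nonneg

lemma HasWalkBounds.n2i_pow_mul_psiM_le (hn : 0 < n) (hq : 0 ≤ q) (hpq : q < p)
    {lam : Fin n → ℝ} {v : Fin n → Fin n → ℝ}
    (hd : IsSpectralDecomp (meanMatrix n k p q cl) lam v)
    (h : HasWalkBounds cl ((6 * Real.log n * √(n * p)) ^ 2) M)
    (hlower : ∀ c, (n : ℝ) / (2 * k) ≤ clusterSize cl c)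
    (hupper : ∀ c, clusterSize cl c ≤ 2 * ((n : ℝ) / k)) {m : ℕ} (hm : m ≤ Real.log n) :
    n2i (M ^ (m + 1) * psiM (lam ⟨0, hn⟩) ((p - q) * (n / k)) (meanMatrix n k p q cl)) ≤
      50000 * √(k * p) * (6 * √(n * p)) ^ m * Real.log n ^ (m + 1) := by
  have : (0 : ℝ) < n := by exact_mod_cast hn
  have hk0 : (0 : ℝ) < k := by exact_mod_cast (cl ⟨0, hn⟩).pos
  have : 0 ≤ Real.log n := Real.log_natCast_nonneg n
  refine Real.iSup_le (fun u => ?_) (by positivity)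
  rw [mul_apply_eq_vecMul]
  calc _ ≤ 3 * enorm (clusterAvg cl ((M ^ (m + 1)) u)) :=
        enorm_vecMul_psiM_meanMatrix_le hn hq hpq (by positivity) hupper hd _
    _ ≤ 3 * (300 * Real.log n * √(k * p) * (6 * Real.log n * √(n * p)) ^ m) := by
        gcongr
        exact h.enorm_clusterAvg_le (hq.trans hpq.le) hlower hm u
    _ = 900 * (√(k * p) * (6 * √(n * p)) ^ m * Real.log n ^ (m + 1)) := by ring
    _ ≤ 50000 * (√(k * p) * (6 * √(n * p)) ^ m * Real.log n ^ (m + 1)) := by gcongr; norm_num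
    _ = _ := by ring

lemma HasWalkBounds.n2i_pow_mul_anticommutator_le (hn : 0 < n) (hq : 0 ≤ q) (hpq : q < p)
    {lam : Fin n → ℝ} {v : Fin n → Fin n → ℝ}
    (hd : IsSpectralDecomp (meanMatrix n k p q cl) lam v) (hM : M.IsSymm)
    (h : HasWalkBounds cl ((6 * Real.log n * √(n * p)) ^ 2) M)
    (hlower : ∀ c, (n : ℝ) / (2 * k) ≤ clusterSize cl c)
    (hsignal : 6 * Real.log n * √(n * p) ≤ (p - q) * (n / k)) {m : ℕ}
    (hm : m + 1 ≤ Real.log n) :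
    n2i (M ^ (m + 1) * ((-(1 / (lam ⟨0, hn⟩ * ((p - q) * (n / k))))) •
        (M * meanMatrix n k p q cl + meanMatrix n k p q cl * M))) ≤
      50000 * √(k * p) * (6 * √(n * p)) ^ m * Real.log n ^ (m + 1) := by
  have : (0 : ℝ) < n := by exact_mod_cast hn
  have hk0 : (0 : ℝ) < k := by exact_mod_cast (cl ⟨0, hn⟩).pos
  have : 0 ≤ Real.log n := Real.log_natCast_nonneg n
  have hB : 0 < (p - q) * (n / k) := mul_pos (sub_pos.2 hpq) (by positivity)
  set T := 6 * Real.log n * √(n * p) with hT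
  have hT0 : 0 ≤ T := by positivity
  have havg (j : ℕ) (hj : j ≤ Real.log n) (u : Fin n) :=
    h.enorm_clusterAvg_le (hq.trans hpq.le) hlower hj u
  have hnorm : specNorm M ≤ 150 * T := h.specNorm_le hM (by linarith [m.cast_nonneg (α := ℝ)]) hT0
  refine Real.iSup_le (fun u => ?_) (by positivity)
  calc _ ≤ (enorm (clusterAvg cl ((M ^ (m + 1) * M) u)) +
        specNorm M * enorm (clusterAvg cl ((M ^ (m + 1)) u))) / ((p - q) * (n / k)) :=
        enorm_row_mul_anticommutator_le hn hq hpq hd hB hM _ u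
    _ ≤ (300 * Real.log n * √(k * p) * T ^ (m + 1) +
        150 * T * (300 * Real.log n * √(k * p) * T ^ m)) / ((p - q) * (n / k)) := by
        gcongr
        · rw [← pow_succ]
          exact havg (m + 1) (by exact_mod_cast hm) u
        · exact enorm_nonneg _
        · exact havg m (by linarith) u
    _ = 45300 * (Real.log n * √(k * p) * T ^ m) * (T / ((p - q) * (n / k))) := by ring
    _ ≤ 50000 * (Real.log n * √(k * p) * T ^ m) * 1 := by
        gcongr
        · norm_num
        · exact (div_le_one hB).2 hsignal
    _ = _ := by rw [hT]; ring

end WalkBounds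

section GoodEvent

variable {n k : ℕ} {cl : Fin n → Fin k}

lemma inv_le_testDensity (u : Fin n) (a : Fin k ⊕ Fin n) : (k : ℝ)⁻¹ ≤ testDensity cl u a := by
  have hk : (1 : ℝ) ≤ k := by exact_mod_cast (cl u).pos
  rcases a with c | _
  · rw [testDensity]
    split_ifs
    · exact inv_le_one_of_one_le₀ hk
    · rw [inv_eq_one_div]
      gcongr
      norm_num
  · exact inv_le_one_of_one_le₀ hk

lemma testDensity_le_one (u : Fin n) (a : Fin k ⊕ Fin n) : testDensity cl u a ≤ 1 := by
  rcases a with c | _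
  · rw [testDensity]
    split_ifs with hc
    · exact le_rfl
    · have hk : 1 < k := by
        simpa using Fintype.one_lt_card_iff_nontrivial.2 (nontrivial_of_ne c (cl u) hc)
      exact div_le_one_of_le₀ (by exact_mod_cast hk) k.cast_nonneg
  · exact le_rfl

lemma testDensity_eq_one_or_notMem (u : Fin n) (a : Fin k ⊕ Fin n) :
    testDensity cl u a = 1 ∨ u ∉ testSet cl a := by
  rcases a with c | _
  · refine (eq_or_ne c (cl u)).imp (fun hc => ?_) fun hc => ?_
    · simp [testDensity, hc]
    · simpa [testSet] using hc.symm
  · exact .inl rfl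

lemma card_testSet_le (hupper : ∀ c, clusterSize cl c ≤ 2 * ((n : ℝ) / k)) (u : Fin n)
    (a : Fin k ⊕ Fin n) : #(testSet cl a) ≤ testDensity cl u a * n := by
  have hcard : (#(testSet cl a) : ℝ) ≤ n := by exact_mod_cast card_finset_fin_le _
  rcases a with c | _
  · rw [testDensity]
    split_ifs
    · rwa [one_mul]
    · exact (hupper c).trans_eq (by ring)
  · rwa [testDensity, one_mul]

variable {p : ℝ} {Ω : Type*} [MeasurableSpace Ω] {μ : Measure Ω} {X : Sym2 (Fin n) → Ω → ℝ}

lemma IsCenteredNoise.measureReal_not_walk_bound_le (hX : IsCenteredNoise X p μ) (hp0 : 0 < p)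
    (hp1 : p ≤ 1) (hl : 3 ≤ Real.log n) (hupper : ∀ c, clusterSize cl c ≤ 2 * ((n : ℝ) / k))
    (hlp : 4 * Real.log n ^ 2 * k ≤ n * p) {j : ℕ} (hj : j ≤ Real.log n) (u : Fin n)
    (a : Fin k ⊕ Fin n) :
    μ.real {ω | ¬ ((sym2Matrix (X · ω) ^ (j + 1) *ᵥ
        (testSet cl a : Set (Fin n)).indicator 1) u) ^ 2 ≤
      Real.exp 6 * (((6 * Real.log n * √(n * p)) ^ 2) ^ (j + 1) * testDensity cl u a)} ≤
      1 / n ^ 6 := by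
  have hk : (0 : ℝ) < k := by exact_mod_cast (cl u).pos
  have hdensity := inv_le_testDensity (cl := cl) u a
  have hdegree : 4 * Real.log n ^ 2 ≤ testDensity cl u a * (n * p) :=
    calc _ ≤ (k : ℝ)⁻¹ * (n * p) := (le_inv_mul_iff₀' hk).2 hlp
      _ ≤ _ := by gcongr
  have hsq : (6 * Real.log n * √(n * p)) ^ 2 = 36 * Real.log n ^ 2 * (n * p) := by
    rw [mul_pow, Real.sq_sqrt (by positivity)]
    ring
  simp only [not_le, hsq]
  simpa only [Fintype.card_fin] using hX.measureReal_lt_sq_pow_mulVec_indicator_le hp0 hp1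
    (by rwa [Fintype.card_fin]) u ((inv_pos.2 hk).trans_le hdensity) (testDensity_le_one u a)
    (testDensity_eq_one_or_notMem u a) (by simpa using card_testSet_le hupper u a)
    (by rwa [Fintype.card_fin]) (by rwa [Fintype.card_fin])

theorem IsCenteredNoise.ofReal_le_measure_hasWalkBounds (hX : IsCenteredNoise X p μ) (hp0 : 0 < p)
    (hp1 : p ≤ 1) (hl : 3 ≤ Real.log n) (hupper : ∀ c, clusterSize cl c ≤ 2 * ((n : ℝ) / k))
    (hlp : 4 * Real.log n ^ 2 * k ≤ n * p) :
    ENNReal.ofReal (1 - 2 / n ^ 3) ≤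
      μ {ω | HasWalkBounds cl ((6 * Real.log n * √(n * p)) ^ 2) (sym2Matrix (X · ω))} := by
  have : IsProbabilityMeasure μ := hX.indep.isProbabilityMeasure
  have hn : (0 : ℝ) < n := by
    by_contra! hn
    linarith [Real.log_nonpos (Nat.cast_nonneg n) (hn.trans zero_le_one)]
  have hfloor : ⌊Real.log n⌋₊ + 1 ≤ n := by
    have := Nat.floor_le (show 0 ≤ Real.log n by linarith)
    have := Real.log_le_sub_one_of_pos hn
    exact_mod_cast (by linarith : (⌊Real.log n⌋₊ : ℝ) + 1 ≤ n)
  have hkn : k ≤ n := by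
    have : (k : ℝ) ≤ 4 * Real.log n ^ 2 * k := le_mul_of_one_le_left k.cast_nonneg (by nlinarith)
    exact_mod_cast (this.trans hlp).trans (mul_le_of_le_one_right hn.le hp1)
  let s : Finset (ℕ × Fin n × (Fin k ⊕ Fin n)) := range (⌊Real.log n⌋₊ + 1) ×ˢ univ
  have hs : (#s : ℝ) ≤ n * (n * (2 * n)) := by
    have : #s ≤ n * (n * (2 * n)) := by
      simp only [s, card_product, card_range, card_univ, Fintype.card_prod, Fintype.card_sum,
        Fintype.card_fin]
      gcongr
      linarith
    exact_mod_cast this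
  have hunion := ofReal_one_sub_le_measure_forall_mem (μ := μ) (s := s) fun i hi =>
    hX.measureReal_not_walk_bound_le (cl := cl) hp0 hp1 hl hupper hlp
      ((Nat.le_floor_iff (by linarith)).1 (mem_range_succ_iff.1 (mem_product.1 hi).1)) i.2.1 i.2.2
  refine (ENNReal.ofReal_le_ofReal ?_).trans (hunion.trans (measure_mono fun ω hω j hj u a =>
    hω (j, u, a) (mem_product.2 ⟨mem_range_succ_iff.2 (Nat.le_floor hj), mem_univ _⟩)))
  have hsum : #s * (1 / (n : ℝ) ^ 6) ≤ n * (n * (2 * n)) * (1 / n ^ 6) := by gcongr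
  refine sub_le_sub_left (hsum.trans_eq ?_) 1
  field_simp

end GoodEvent

section Parameters

variable {n k : ℕ} {p q l : ℝ}

lemma noise_le_signal_and_le_expected_degree (hn : 0 < n) (hk : 0 < k) (hq : 0 ≤ q) (hpq : q < p)
    (hsize : 36 * k ^ 2 * p * l ^ 2 / (p - q) ^ 2 ≤ n) :
    6 * l * √(n * p) ≤ (p - q) * (n / k) ∧ 36 * k ^ 2 * l ^ 2 ≤ n * p := by
  have hp : 0 < p := hq.trans_lt hpq
  have hsub : 0 < p - q := sub_pos.2 hpq
  rw [div_le_iff₀ (by positivity)] at hsize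
  constructor
  · refine le_of_pow_le_pow_left₀ two_ne_zero (by positivity) ?_
    rw [mul_pow, Real.sq_sqrt (by positivity), mul_pow, mul_pow, div_pow, mul_div_assoc',
      le_div_iff₀ (by positivity)]
    calc _ = 36 * k ^ 2 * p * l ^ 2 * n := by ring
      _ ≤ n * (p - q) ^ 2 * n := by gcongr
      _ = _ := by ring
  · refine le_of_mul_le_mul_right ?_ hp
    calc 36 * k ^ 2 * l ^ 2 * p = 36 * k ^ 2 * p * l ^ 2 := by ring
      _ ≤ n * (p - q) ^ 2 := hsize
      _ ≤ n * p ^ 2 := by gcongr; linarith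
      _ = n * p * p := by ring

lemma log_natCast_eq_zero_or_half_le (n : ℕ) : Real.log n = 0 ∨ 1 / 2 ≤ Real.log n := by
  obtain hn | hn := lt_or_ge n 2
  · left
    interval_cases n <;> simp
  · right
    have := Real.log_two_gt_d9
    have := Real.log_le_log two_pos (by exact_mod_cast hn : (2 : ℝ) ≤ n)
    linarith

lemma log_natCast_sq_le (n : ℕ) : Real.log n ^ 2 ≤ 1024 * Real.log n ^ 12 := by
  obtain h | h := log_natCast_eq_zero_or_half_le n
  · simp [h]
  · have hone : 1 ≤ (2 * Real.log n) ^ 10 := one_le_pow₀ (by linarith)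
    calc _ ≤ Real.log n ^ 2 * (2 * Real.log n) ^ 10 := le_mul_of_one_le_right (sq_nonneg _) hone
      _ = _ := by ring

-- For `n = 1` the relative deviation `1 / (16 * log n)` is `1 / 0 = 0`.
lemma Balanced.half_le_and_le_two_mul {cl : Fin n → Fin k} (h : Balanced n k cl) (c : Fin k) :
    (n : ℝ) / (2 * k) ≤ clusterSize cl c ∧ clusterSize cl c ≤ 2 * ((n : ℝ) / k) := by
  have hdev : 1 / (16 * Real.log n) ≤ 1 / 2 := by
    obtain hlog | hlog := log_natCast_eq_zero_or_half_le n
    · simp [hlog]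
    · exact one_div_le_one_div_of_le two_pos (by linarith)
  refine ⟨le_trans ?_ (h c).1, (h c).2.trans ?_⟩
  · calc (n : ℝ) / (2 * k) = (1 - 1 / 2) * (n / k) := by ring
      _ ≤ _ := by gcongr
  · gcongr
    linarith

lemma spread_bound_le (hl : 1 ≤ l) (η : ℕ) :
    50000 * √(k * p) * (6 * √(n * p)) ^ (η - 1) * l ^ η ≤
      1000000 * √(k * p) * (100 * √(n * p)) ^ (η - 1) * l ^ (5 * η) := by
  gcongr
  · norm_num
  · norm_num
  · lia

end Parameters

end SBM

open SBM in
theorem E_pow_L_and_psi_bound_general :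
    ∃ C > (0 : ℝ), ∃ c > (0 : ℝ),
      ∀ (n k : ℕ) (hn : 0 < n) (p q : ℝ), 0 ≤ q → q < p → p ≤ 1 → ∀ cl : Fin n → Fin k,
        (∀ i, (n : ℝ) / (2 * k) ≤ clusterSize cl i) →
        (∀ i, clusterSize cl i ≤ 2 * ((n : ℝ) / k)) →
        C * k ^ 2 * p * Real.log n ^ 2 / (p - q) ^ 2 ≤ n →
        ∀ (lamG : Fin n → ℝ) (vG : Fin n → Fin n → ℝ),
        IsSpectralDecomp (meanMatrix n k p q cl) lamG vG →
        ∀ (Ω : Type*) [MeasurableSpace Ω] (μ : Measure Ω) (X : Sym2 (Fin n) → Ω → ℝ),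
        IsCenteredNoise X p μ →
        ENNReal.ofReal (1 - c / n ^ 2) ≤ μ {ω | ∀ η : ℕ, 1 ≤ η → η ≤ Real.log n →
          n2i (sym2Matrix (X · ω) ^ η *
            ((-(1 / (lamG ⟨0, hn⟩ * ((p - q) * (n / k))))) •
              (sym2Matrix (X · ω) * meanMatrix n k p q cl +
                meanMatrix n k p q cl * sym2Matrix (X · ω)))) ≤
            50000 * √(k * p) * (6 * √(n * p)) ^ (η - 1) * Real.log n ^ η ∧
          n2i (sym2Matrix (X · ω) ^ η *
            psiM (lamG ⟨0, hn⟩) ((p - q) * (n / k)) (meanMatrix n k p q cl)) ≤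
            50000 * √(k * p) * (6 * √(n * p)) ^ (η - 1) * Real.log n ^ η} := by
  refine ⟨36, by norm_num, 10000, by norm_num, fun n k hn p q hq hpq hp cl hlower hupper hsize
    lamG vG hdec Ω _ μ X hX => ?_⟩
  have hn1 : (1 : ℝ) ≤ n := by exact_mod_cast hn
  obtain hsmall | hlarge := lt_or_ge (n : ℝ) 100
  · rw [ENNReal.ofReal_of_nonpos]
    · exact zero_le
    · rw [sub_nonpos, one_le_div (by positivity)]
      nlinarith
  have hl : 3 ≤ Real.log n := by
    rw [Real.le_log_iff_exp_le (by linarith)]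
    exact (exp_natCast_le 3).trans (le_trans (by norm_num) hlarge)
  have hk : 0 < k := (cl ⟨0, hn⟩).pos
  have hk1 : (1 : ℝ) ≤ k := by exact_mod_cast hk
  obtain ⟨hsignal, hdegree⟩ := noise_le_signal_and_le_expected_degree hn hk hq hpq hsize
  have hlp : 4 * Real.log n ^ 2 * k ≤ n * p :=
    calc _ = 4 * (k : ℝ) ^ 1 * Real.log n ^ 2 := by ring
      _ ≤ 36 * (k : ℝ) ^ 2 * Real.log n ^ 2 := by gcongr <;> norm_num
      _ ≤ n * p := hdegree
  have hwalk := hX.ofReal_le_measure_hasWalkBounds (hq.trans_lt hpq) hp hl hupper hlp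
  refine (ENNReal.ofReal_le_ofReal ?_).trans (hwalk.trans (measure_mono fun ω hω η hη1 hη => ?_))
  · have : (2 : ℝ) / n ^ 3 ≤ 10000 / n ^ 2 := by gcongr <;> norm_num
    linarith
  · obtain ⟨m, rfl⟩ := Nat.exists_eq_add_one.2 hη1
    rw [Nat.cast_add_one] at hη
    exact ⟨HasWalkBounds.n2i_pow_mul_anticommutator_le hn hq hpq hdec (isSymm_sym2Matrix _) hω
      hlower hsignal hη, HasWalkBounds.n2i_pow_mul_psiM_le hn hq hpq hdec hω hlower hupper
      (by linarith)⟩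

open SBM in
/-- There are constants `C, c > 0` such that: if the partition is
balanced, `k ≥ 2` and `n ≥ C·k²·p·(log n)¹²/(p−q)²`, then with probability at least
`1 − c·n^{−2}` over `E`, for every `1 ≤ η ≤ log n`:
`‖E^η·L‖_{2→∞} ≤ 10⁶·√(kp)·(100√(np))^{η−1}·(log n)^{5η}` and likewise for `E^η·ψ(G)`,
where `L = A·(EG + GE)`. -/
theorem E_pow_L_and_psi_bound :
    ∃ C > (0 : ℝ), ∃ c > (0 : ℝ),
      ∀ (n k : ℕ) (hn : 0 < n) (hk : 2 ≤ k)
        (p q : ℝ) (hq : 0 ≤ q) (hpq : q < p) (hp : p ≤ 1)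
        (cl : Fin n → Fin k) (hbal : Balanced n k cl)
        (hsize : (n : ℝ) ≥ C * k ^ 2 * p * (Real.log n) ^ 12 / (p - q) ^ 2)
        (lamG : Fin n → ℝ) (vG : Fin n → Fin n → ℝ)
        (hdecG : IsSpectralDecomp (meanMatrix n k p q cl) lamG vG)
        (Ω : Type) (_ : MeasureSpace Ω) (_ : IsProbabilityMeasure (ℙ : Measure Ω))
        (E : Ω → Matrix (Fin n) (Fin n) ℝ) (hE : NoiseModel p q cl E),
        ENNReal.ofReal (1 - c / (n : ℝ) ^ 2) ≤
          ℙ {ω : Ω |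
            ∀ η : ℕ, 1 ≤ η → (η : ℝ) ≤ Real.log n →
              n2i (E ω ^ η *
                  ((-(1 / (lamG ⟨0, hn⟩ * ((p - q) * ((n : ℝ) / k))))) •
                    (E ω * meanMatrix n k p q cl + meanMatrix n k p q cl * E ω))) ≤
                1000000 * Real.sqrt ((k : ℝ) * p) *
                  (100 * Real.sqrt ((n : ℝ) * p)) ^ (η - 1) *
                  (Real.log n) ^ (5 * η) ∧
              n2i (E ω ^ η *
                  psiM (lamG ⟨0, hn⟩) ((p - q) * ((n : ℝ) / k)) (meanMatrix n k p q cl)) ≤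
                1000000 * Real.sqrt ((k : ℝ) * p) *
                  (100 * Real.sqrt ((n : ℝ) * p)) ^ (η - 1) *
                  (Real.log n) ^ (5 * η)} := by
  obtain ⟨C, hC, c, hc, hbound⟩ := E_pow_L_and_psi_bound_general
  refine ⟨1024 * C, by positivity, c, hc, fun n k hn _ p q hq hpq hp cl hbal hsize lamG vG hdecG
    Ω _ _ E hE => ?_⟩
  obtain ⟨X, hX, rfl⟩ := hE.exists_isCenteredNoise hq hpq.le hp
  have hp0 : 0 < p := hq.trans_lt hpq
  have hsize_sq : C * k ^ 2 * p * Real.log n ^ 2 / (p - q) ^ 2 ≤ n :=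
    calc _ ≤ C * k ^ 2 * p * (1024 * Real.log n ^ 12) / (p - q) ^ 2 := by
          gcongr
          exact log_natCast_sq_le n
      _ = 1024 * C * k ^ 2 * p * Real.log n ^ 12 / (p - q) ^ 2 := by ring
      _ ≤ n := hsize
  refine (hbound n k hn p q hq hpq hp cl (fun i => (hbal.half_le_and_le_two_mul i).1)
    (fun i => (hbal.half_le_and_le_two_mul i).2) hsize_sq lamG vG hdecG Ω ℙ X hX).trans
    (measure_mono fun ω hω η hη1 hη => ?_)
  have hle := spread_bound_le (n := n) (k := k) (p := p) (l := Real.log n)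
    (le_trans (by exact_mod_cast hη1) hη) η
  exact ⟨(hω η hη1 hη).1.trans hle, (hω η hη1 hη).2.trans hle⟩
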